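/- arXiv:1604.06997 — 2 statements merged into one kernel-verified Lean document; each statement's English description precedes it below -/
import Mathlib

section
/- There is an absolute constant C > 0 such that for every n ≥ 1, every integer k ≥ 2, and every k-decomposable permutation point set X of size n, the set G of points added by GREEDY satisfies |X ∪ G| ≤ C · n · log₂ k (i.e., GREEDY takes O(n log k) time on k-decomposable sequences). -/
open Finset

attribute [local instance] Classical.propDecidable

/-- A point in the plane: first coordinate is the key, second is the time. -/
abbrev Pt : Type := ℤ × ℤ

/-- `r` lies in the closed axis-parallel rectangle with opposite corners `p` and `q`. -/
def inRect (p q r : Pt) : Prop :=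
  min p.1 q.1 ≤ r.1 ∧ r.1 ≤ max p.1 q.1 ∧ min p.2 q.2 ≤ r.2 ∧ r.2 ≤ max p.2 q.2

/-- `r` lies in the open axis-parallel rectangle with opposite corners `p` and `q`. -/
def inOpenRect (p q r : Pt) : Prop :=
  min p.1 q.1 < r.1 ∧ r.1 < max p.1 q.1 ∧ min p.2 q.2 < r.2 ∧ r.2 < max p.2 q.2

/-- `S` is an arborally satisfied set. -/
def ArbSat (S : Finset Pt) : Prop :=
  ∀ p ∈ S, ∀ q ∈ S, p.1 = q.1 ∨ p.2 = q.2 ∨ ∃ r ∈ S, r ≠ p ∧ r ≠ q ∧ inRect p q r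

/-- `X` is the permutation point set `{(σ(t), t) : 1 ≤ t ≤ n}` of some permutation `σ` of
`{1, …, n}`. -/
def IsPermPointSet (n : ℕ) (X : Finset Pt) : Prop :=
  ∃ σ : Equiv.Perm (Fin n),
    X = Finset.univ.image (fun t : Fin n => ((((σ t : ℕ) : ℤ) + 1, ((t : ℕ) : ℤ) + 1) : Pt))

/-- The points added by GREEDY at time `t`, given the point set `X` and the set `G` of points
added before time `t`: for the point `p` of `X` with time `t` and each point `q` of time `< t`
with a different key such that the rectangle spanned by `p` and `q` contains no other point of
time `< t`, the point `(key q, t)` is added. -/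
noncomputable def greedyStep (X G : Finset Pt) (t : ℤ) : Finset Pt :=
  (X.filter (fun p => p.2 = t)).biUnion (fun p =>
    (((X ∪ G).filter (fun s => s.2 < t)).filter (fun q =>
      q.1 ≠ p.1 ∧ ∀ r ∈ (X ∪ G).filter (fun s => s.2 < t), inRect p q r → r = q)).image
      (fun q => ((q.1, t) : Pt)))

/-- All points added by GREEDY while processing times `1, …, t`. -/
noncomputable def greedyUpTo (X : Finset Pt) : ℕ → Finset Pt
  | 0 => ∅
  | t + 1 => greedyUpTo X t ∪ greedyStep X (greedyUpTo X t) ((t : ℤ) + 1)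

/-- The set `G` of points added by GREEDY over the whole execution on a permutation point set
`X` of size `n`. -/
noncomputable def greedyG (n : ℕ) (X : Finset Pt) : Finset Pt := greedyUpTo X n

/-- `OP r` is the point of `X` processed at the time at which `r` was added; for `r ∈ X`,
`OP r = r`. -/
noncomputable def OP (X : Finset Pt) (r : Pt) : Pt :=
  ((X.filter (fun p => p.2 = r.2)).toList).headI

/-- The first point of `S` above `p`: the point of `S` with the same key as `p`, smaller time,
and the largest such time. -/
noncomputable def firstAbove (S : Finset Pt) (p : Pt) : Pt :=
  (p.1, (((S.filter (fun q => q.1 = p.1 ∧ q.2 < p.2)).image Prod.snd).max).unbotD 0)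

/-- The pair `CP(p) = (OP(p), OP(q))` where `q` is the first point of `X ∪ G` above `p`. -/
noncomputable def CP (X G : Finset Pt) (p : Pt) : Pt × Pt :=
  (OP X p, OP X (firstAbove (X ∪ G) p))

/-- `CP(p) ∈ MMC` (*zig*). -/
def inMMC (X G : Finset Pt) (p : Pt) : Prop :=
  ((CP X G p).1.1 < p.1 ∧ (CP X G p).2.1 < (CP X G p).1.1 ∧ (CP X G p).2.2 < (CP X G p).1.2)
  ∨ (p.1 < (CP X G p).1.1 ∧ (CP X G p).1.1 < (CP X G p).2.1 ∧ (CP X G p).2.2 < (CP X G p).1.2)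

/-- `CP(p) ∈ MFC` (*zag*). -/
def inMFC (X G : Finset Pt) (p : Pt) : Prop :=
  ((CP X G p).1.1 < p.1 ∧ p.1 ≤ (CP X G p).2.1 ∧ (CP X G p).2.2 < p.2)
  ∨ (p.1 < (CP X G p).1.1 ∧ (CP X G p).2.1 ≤ p.1 ∧ (CP X G p).2.2 < p.2)

/-- A pair is good if no point of `X` lies in the open rectangle spanned by it. -/
def IsGoodPair (X : Finset Pt) (pr : Pt × Pt) : Prop :=
  ∀ r ∈ X, ¬ inOpenRect pr.1 pr.2 r

/-- `B` is a block of `X`: the set of points of `X` whose times lie in some interval, whose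
keys form a set of consecutive integers; blocks are nonempty. -/
def IsBlock (X B : Finset Pt) : Prop :=
  B.Nonempty ∧ (∃ i j : ℤ, B = X.filter (fun p => i ≤ p.2 ∧ p.2 ≤ j)) ∧
    ∃ c d : ℤ, B.image Prod.fst = Finset.Icc c d

/-- `Top(B)`: the point of `B` with the smallest time. -/
noncomputable def TopPt (B : Finset Pt) : Pt :=
  ((B.filter (fun p => ∀ q ∈ B, p.2 ≤ q.2)).toList).headI

/-- A decomposition tree of `X`: a rooted tree whose nodes are blocks of `X`, whose root is
`X`, whose leaves are exactly the singleton blocks, and in which the children of every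
internal node partition it. -/
structure DecompTree (X : Finset Pt) where
  nodes : Finset (Finset Pt)
  parent : Finset Pt → Finset Pt
  isBlock_nodes : ∀ B ∈ nodes, IsBlock X B
  root_mem : X ∈ nodes
  parent_mem : ∀ B ∈ nodes, B ≠ X → parent B ∈ nodes
  ssubset_parent : ∀ B ∈ nodes, B ≠ X → B ⊂ parent B
  leaf_iff : ∀ B ∈ nodes, (¬ ∃ C ∈ nodes, C ≠ X ∧ parent C = B) ↔ B.card = 1
  children_partition : ∀ B ∈ nodes, B.card ≠ 1 →
    ∀ x ∈ B, ∃! C, C ∈ nodes ∧ C ≠ X ∧ parent C = B ∧ x ∈ C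

/-- The children of a node `B` in a decomposition tree. -/
noncomputable def DecompTree.children {X : Finset Pt} (T : DecompTree X) (B : Finset Pt) :
    Finset (Finset Pt) :=
  T.nodes.filter (fun C => C ≠ X ∧ T.parent C = B)

/-- `X` is `k`-decomposable: it admits a decomposition tree in which every node has at most
`k` children. -/
def kDecomposable (k : ℕ) (X : Finset Pt) : Prop :=
  ∃ T : DecompTree X, ∀ B ∈ T.nodes, (T.children B).card ≤ k

/-- `RT(p)`: the node of the decomposition tree closest to the root (i.e. containing all
others) among the nodes `B` with `Top(B) = p`. -/
noncomputable def RT {X : Finset Pt} (T : DecompTree X) (p : Pt) : Finset Pt :=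
  (((T.nodes.filter (fun B => TopPt B = p)).filter
      (fun B => ∀ C ∈ T.nodes, TopPt C = p → C ⊆ B)).toList).headI

/-- The points added by GREEDY (`G`) while processing `Top(B)` that lie to the left of
`Top(B)`. -/
noncomputable def leftSet (G B : Finset Pt) : Finset Pt :=
  G.filter (fun s => s.2 = (TopPt B).2 ∧ s.1 < (TopPt B).1)

/-- `Left(B)`: among the points added by GREEDY while processing `Top(B)` with key less than
`key (Top B)`, the one with the largest key (junk if none exists). -/
noncomputable def leftPt (G B : Finset Pt) : Pt :=
  (((leftSet G B).filter (fun s => ∀ r ∈ leftSet G B, r.1 ≤ s.1)).toList).headI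

/-- The points added by GREEDY (`G`) while processing `Top(B)` that lie to the right of
`Top(B)`. -/
noncomputable def rightSet (G B : Finset Pt) : Finset Pt :=
  G.filter (fun s => s.2 = (TopPt B).2 ∧ (TopPt B).1 < s.1)

/-- `Right(B)`: among the points added by GREEDY while processing `Top(B)` with key greater
than `key (Top B)`, the one with the smallest key (junk if none exists). -/
noncomputable def rightPt (G B : Finset Pt) : Pt :=
  (((rightSet G B).filter (fun s => ∀ r ∈ rightSet G B, s.1 ≤ r.1)).toList).headI

/-!
View GREEDY through the keys it touches. For a block `B` call a key of `B` visible if it is exposed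
to accesses from one side of `B`, and let the potential of `B` be the number of touches during `B`
after its first access plus the number of keys of `B` visible at its end. While `B` is accessed, at
most two keys outside `B` are touched after the first access; an access outside `B` touches only
visible keys of `B`, and leaves at most two of the touched ones visible. Hence, when a block with
`m` children is processed, the visible keys of a child pay for the touches in it at the first
accesses of its siblings, up to a constant for each sibling that touches it. The pairs of siblings
one of which touches the other number `O(m log k)`: the same argument, with visible children in
place of visible keys, bounds the pairs between the lower and the upper half of the children, and
one recurses into the halves. The potential of a block therefore exceeds the sum of the potentials
of its children by `O(m log k)`, and the total number of children over the tree is `O(n)`.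
-/

/-! ### Visible keys -/

section Exposure

variable {K : Type*} {T : ℕ → Finset K} {D E : Set K} {x y : K} {t t' : ℕ}

/-- `x` is exposed within `D` at time `t`: from some earlier time `u` at which `x` is touched, up to
`t`, no other key of `D` is touched. Here `T t` is the set of keys touched at time `t`. -/
def Exposed (T : ℕ → Finset K) (D : Set K) (x : K) (t : ℕ) : Prop :=
  ∃ u < t, x ∈ T u ∧ ∀ v, u ≤ v → v < t → ∀ y ∈ D, y ∈ T v → y = x

theorem Exposed.mono (h : Exposed T E x t) (hDE : D ⊆ E) : Exposed T D x t := by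
  obtain ⟨u, hu, hx, hD⟩ := h
  exact ⟨u, hu, hx, fun v huv hvt y hy => hD v huv hvt y (hDE hy)⟩

theorem Exposed.of_notMem (h : Exposed T D x t') (htt' : t ≤ t')
    (hx : ∀ v, t ≤ v → v < t' → x ∉ T v) : Exposed T D x t := by
  obtain ⟨u, hu, hxu, hD⟩ := h
  have hut : u < t := lt_of_not_ge fun htu => hx u htu hu hxu
  exact ⟨u, hut, hxu, fun v huv hvt => hD v huv (hvt.trans_le htt')⟩

theorem Exposed.eq_of_mem (h : Exposed T D x (t + 1)) (hy : y ∈ D) (hyt : y ∈ T t) : y = x := by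
  obtain ⟨u, hu, -, hD⟩ := h
  exact hD t (Nat.le_of_lt_succ hu) t.lt_succ_self y hy hyt

theorem Exposed.exists_last (h : Exposed T D x t) :
    ∃ u < t, x ∈ T u ∧ ∀ v, u ≤ v → v < t → ∀ y ∈ D, y ∈ T v → y = x ∧ v = u := by
  obtain ⟨u, hut, hxu, hD⟩ := h
  obtain ⟨w, hw, hlast⟩ := exists_max_image {v ∈ range t | x ∈ T v} id
    ⟨u, mem_filter.2 ⟨mem_range.2 hut, hxu⟩⟩
  obtain ⟨hwt, hxw⟩ := mem_filter.1 hw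
  have huw : u ≤ w := hlast u (mem_filter.2 ⟨mem_range.2 hut, hxu⟩)
  refine ⟨w, mem_range.1 hwt, hxw, fun v hwv hvt y hy hyv => ?_⟩
  obtain rfl := hD v (huw.trans hwv) hvt y hy hyv
  exact ⟨rfl, (hlast v (mem_filter.2 ⟨mem_range.2 hvt, hyv⟩)).antisymm hwv⟩

/-- The keys of `R` touched at time `t`. -/
noncomputable def touched (T : ℕ → Finset K) (R : Set K) (t : ℕ) : Finset K := {x ∈ T t | x ∈ R}

theorem mem_touched {R : Set K} : x ∈ touched T R t ↔ x ∈ T t ∧ x ∈ R := mem_filter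

end Exposure

section Visibility

variable {K : Type*} [LinearOrder K] {T : ℕ → Finset K} {R : Set K} {x y z : K} {t t' : ℕ}

/-- The keys of `R` visible at time `t` from one of the two sides of `R`: those exposed within the
part of `R` below them or within the part of `R` above them. -/
noncomputable def visible (T : ℕ → Finset K) (R : Set K) (t : ℕ) : Finset K :=
  {x ∈ (range t).biUnion T |
    x ∈ R ∧ (Exposed T (R ∩ Set.Iic x) x t ∨ Exposed T (R ∩ Set.Ici x) x t)}

theorem mem_visible : x ∈ visible T R t ↔
    x ∈ R ∧ (Exposed T (R ∩ Set.Iic x) x t ∨ Exposed T (R ∩ Set.Ici x) x t) := by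
  refine mem_filter.trans (and_iff_right_of_imp ?_)
  rintro ⟨-, ⟨u, hu, hx, -⟩ | ⟨u, hu, hx, -⟩⟩ <;>
    exact mem_biUnion.2 ⟨u, mem_range.2 hu, hx⟩

theorem mem_of_mem_visible (h : x ∈ visible T R t) : x ∈ R := (mem_visible.1 h).1

theorem exists_mem_of_mem_visible (h : x ∈ visible T R t) : ∃ u < t, x ∈ T u := by
  obtain ⟨u, hu, hx⟩ := mem_biUnion.1 (mem_filter.1 h).1
  exact ⟨u, mem_range.1 hu, hx⟩

theorem mem_visible_of_notMem (h : x ∈ visible T R t') (htt' : t ≤ t')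
    (hx : ∀ v, t ≤ v → v < t' → x ∉ T v) : x ∈ visible T R t := by
  obtain ⟨hxR, hexp⟩ := mem_visible.1 h
  exact mem_visible.2 ⟨hxR, hexp.imp (·.of_notMem htt' hx) (·.of_notMem htt' hx)⟩

theorem forall_le_or_forall_ge_of_mem_visible (hy : y ∈ visible T R (t + 1)) :
    (∀ z ∈ touched T R t, y ≤ z) ∨ (∀ z ∈ touched T R t, z ≤ y) := by
  refine (mem_visible.1 hy).2.imp (fun h z hz => ?_) fun h z hz => ?_ <;>
    obtain ⟨hz, hzR⟩ := mem_touched.1 hz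
  · exact (le_total y z).elim id fun hzy => (h.eq_of_mem ⟨hzR, hzy⟩ hz).ge
  · exact (le_total z y).elim id fun hyz => (h.eq_of_mem ⟨hzR, hyz⟩ hz).le

end Visibility

section Colouring

variable {K ι : Type*} [LinearOrder K] {R : Set K} {col : K → ι}

theorem col_eq_of_crossing (hcol : ∀ q, (R ∩ col ⁻¹' {q}).OrdConnected) {x₁ y₁ x₂ y₂ : K}
    (hx₁ : x₁ ∈ R) (hy₁ : y₁ ∈ R) (hx₂ : x₂ ∈ R) (hy₂ : y₂ ∈ R) (h₁ : col x₁ = col y₁)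
    (h₂ : col x₂ = col y₂) (h₁₂ : y₁ ≤ x₂) (h₂₁ : y₂ ≤ x₁) : col y₁ = col y₂ := by
  obtain h | h := le_total y₁ y₂
  · exact (((hcol (col y₁)).out ⟨hy₁, rfl⟩ ⟨hx₁, h₁⟩ ⟨h, h₂₁⟩).2).symm
  · exact ((hcol (col y₂)).out ⟨hy₂, rfl⟩ ⟨hx₂, h₂⟩ ⟨h, h₁₂⟩).2

theorem card_image_inter_image_le_two (hcol : ∀ q, (R ∩ col ⁻¹' {q}).OrdConnected)
    {S V : Finset K} (hS : ∀ x ∈ S, x ∈ R) (hV : ∀ y ∈ V, y ∈ R)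
    (hSV : ∀ y ∈ V, (∀ x ∈ S, y ≤ x) ∨ (∀ x ∈ S, x ≤ y)) :
    #(S.image col ∩ V.image col) ≤ 2 := by
  set L := {y ∈ V | (∀ x ∈ S, y ≤ x)}
  set U := {y ∈ V | (∀ x ∈ S, x ≤ y)}
  have hsub : S.image col ∩ V.image col ⊆
      (S.image col ∩ L.image col) ∪ (S.image col ∩ U.image col) := by
    rw [← inter_union_distrib_left, ← image_union, ← filter_or, filter_true_of_mem hSV]
  have hL : #(S.image col ∩ L.image col) ≤ 1 := by
    refine card_le_one.2 fun p hp q hq => ?_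
    simp only [mem_inter, mem_image, L, mem_filter] at hp hq
    obtain ⟨⟨x₁, hx₁, rfl⟩, y₁, ⟨hy₁, h₁⟩, h₁'⟩ := hp
    obtain ⟨⟨x₂, hx₂, rfl⟩, y₂, ⟨hy₂, h₂⟩, h₂'⟩ := hq
    rw [← h₁', ← h₂']
    exact col_eq_of_crossing hcol (hS _ hx₁) (hV _ hy₁) (hS _ hx₂) (hV _ hy₂) h₁'.symm h₂'.symm
      (h₁ _ hx₂) (h₂ _ hx₁)
  have hU : #(S.image col ∩ U.image col) ≤ 1 := by
    refine card_le_one.2 fun p hp q hq => ?_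
    simp only [mem_inter, mem_image, U, mem_filter] at hp hq
    obtain ⟨⟨x₁, hx₁, rfl⟩, y₁, ⟨hy₁, h₁⟩, h₁'⟩ := hp
    obtain ⟨⟨x₂, hx₂, rfl⟩, y₂, ⟨hy₂, h₂⟩, h₂'⟩ := hq
    exact col_eq_of_crossing hcol (hV _ hy₁) (hS _ hx₁) (hV _ hy₂) (hS _ hx₂) h₁' h₂'
      (h₂ _ hx₁) (h₁ _ hx₂)
  calc #(S.image col ∩ V.image col) ≤ _ := card_le_card hsub
    _ ≤ _ := card_union_le _ _
    _ ≤ 1 + 1 := add_le_add hL hU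

end Colouring

section VisibleColours

variable {K ι : Type*} [LinearOrder K] {T : ℕ → Finset K} {R : Set K} {col : K → ι} {t : ℕ}

theorem card_image_inter_image_visible_le_two (hcol : ∀ q, (R ∩ col ⁻¹' {q}).OrdConnected) :
    #((touched T R t).image col ∩ (visible T R (t + 1)).image col) ≤ 2 :=
  card_image_inter_image_le_two hcol (fun _ hx => (mem_touched.1 hx).2)
    (fun _ => mem_of_mem_visible) fun _ => forall_le_or_forall_ge_of_mem_visible

theorem card_image_visible_succ_le (hcol : ∀ q, (R ∩ col ⁻¹' {q}).OrdConnected) :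
    #((visible T R (t + 1)).image col) ≤ #((visible T R t).image col) + 2 := by
  have hsub : (visible T R (t + 1)).image col ⊆ (visible T R t).image col ∪
      ((touched T R t).image col ∩ (visible T R (t + 1)).image col) := by
    intro q hq
    obtain ⟨x, hx, rfl⟩ := mem_image.1 hq
    by_cases hxt : x ∈ T t
    · exact mem_union_right _ (mem_inter.2
        ⟨mem_image_of_mem col (mem_touched.2 ⟨hxt, mem_of_mem_visible hx⟩), hq⟩)
    · refine mem_union_left _ (mem_image_of_mem col (mem_visible_of_notMem hx t.le_succ ?_))
      intro v hv hv'
      rwa [← hv.antisymm (Nat.le_of_lt_succ hv')]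
  calc #((visible T R (t + 1)).image col) ≤ _ := card_le_card hsub
    _ ≤ _ := card_union_le _ _
    _ ≤ _ := add_le_add_right (card_image_inter_image_visible_le_two hcol) _

end VisibleColours

/-! ### Keys touched while a block is accessed -/

/-- The execution of GREEDY seen through the keys it touches: at time `t < n` the key `s t` is
accessed, and `T t` consists of `s t` and of the keys `x` such that `x` is exposed within the
interval between `s t` and `x`. -/
structure IsGreedyRun {K : Type*} [LinearOrder K] (n : ℕ) (s : ℕ → K) (T : ℕ → Finset K) :
    Prop where
  mem_iff : ∀ t x, x ∈ T t ↔ t < n ∧ (x = s t ∨ Exposed T (Set.uIcc (s t) x) x t)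

/-- The keys of the interval `R` are accessed exactly at the times of `[i, e)`. -/
structure IsTimeBlock {K : Type*} [LinearOrder K] (s : ℕ → K) (R : Set K) (i e : ℕ) : Prop where
  ordConnected : R.OrdConnected
  lt : i < e
  mem_iff : ∀ t, s t ∈ R ↔ i ≤ t ∧ t < e

theorem mem_uIcc_of_notMem {K : Type*} [LinearOrder K] {R : Set K} (hR : R.OrdConnected)
    {a b x y : K} (ha : a ∈ R) (hb : b ∈ R) (hy : y ∉ R) (hyx : y ∈ Set.uIcc a x) :
    y ∈ Set.uIcc b x :=
  (Set.uIcc_subset_uIcc_union_uIcc hyx).resolve_left fun h => hy (hR.uIcc_subset ha hb h)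

namespace IsGreedyRun

variable {K ι : Type*} [LinearOrder K] {n : ℕ} {s : ℕ → K} {T : ℕ → Finset K} {R : Set K}
  {i e t : ℕ} {x y : K}

theorem lt_of_mem (hT : IsGreedyRun n s T) (hx : x ∈ T t) : t < n :=
  ((hT.mem_iff t x).1 hx).1

theorem access_mem (hT : IsGreedyRun n s T) (ht : t < n) : s t ∈ T t :=
  (hT.mem_iff t _).2 ⟨ht, Or.inl rfl⟩

theorem exposed_of_mem (hT : IsGreedyRun n s T) (hx : x ∈ T t) (hne : x ≠ s t) :
    Exposed T (Set.uIcc (s t) x) x t :=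
  ((hT.mem_iff t x).1 hx).2.resolve_left hne

theorem exists_access_le (hT : IsGreedyRun n s T) (hx : x ∈ T t) : ∃ u ≤ t, s u = x := by
  induction t using Nat.strong_induction_on with
  | _ t ih =>
    by_cases hne : x = s t
    · exact ⟨t, le_rfl, hne.symm⟩
    · obtain ⟨u, hut, hxu, -⟩ := hT.exposed_of_mem hx hne
      obtain ⟨v, hvu, hv⟩ := ih u hut hxu
      exact ⟨v, hvu.trans hut.le, hv⟩

theorem exists_mem_uIcc (hT : IsGreedyRun n s T) {u : ℕ} (hy : y ∈ T u) (hut : u < t)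
    (htn : t < n) : ∃ x ∈ T t, x ∈ Set.uIcc (s t) y ∧ ∃ v < t, x ∈ T v := by
  obtain ⟨x, hx, hmin⟩ := exists_minimalFor (fun x => Set.uIcc (s t) x)
    {x ∈ (range t).biUnion T | x ∈ Set.uIcc (s t) y}
    ⟨y, mem_filter.2 ⟨mem_biUnion.2 ⟨u, mem_range.2 hut, hy⟩, Set.right_mem_uIcc⟩⟩
  obtain ⟨hxT, hxy⟩ := mem_filter.1 hx
  obtain ⟨v, hvt, hxv⟩ := mem_biUnion.1 hxT
  rw [mem_range] at hvt
  refine ⟨x, (hT.mem_iff t x).2 ⟨htn, Or.inr ⟨v, hvt, hxv, ?_⟩⟩, hxy, v, hvt, hxv⟩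
  intro w _ hwt z hzx hzw
  have hz : z ∈ ({x ∈ (range t).biUnion T | x ∈ Set.uIcc (s t) y} : Finset K) :=
    mem_filter.2 ⟨mem_biUnion.2 ⟨w, mem_range.2 hwt, hzw⟩, Set.uIcc_subset_uIcc_left hxy hzx⟩
  have hxz : x ∈ Set.uIcc (s t) z :=
    hmin hz (Set.uIcc_subset_uIcc_left hzx) Set.right_mem_uIcc
  rw [Set.uIcc_comm] at hzx hxz
  exact (Set.eq_of_mem_uIcc_of_mem_uIcc hxz hzx).symm

theorem le_of_mem (hT : IsGreedyRun n s T) (hR : IsTimeBlock s R i e) (hxR : x ∈ R)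
    (hx : x ∈ T t) : i ≤ t := by
  obtain ⟨u, hut, rfl⟩ := hT.exists_access_le hx
  exact ((hR.mem_iff u).1 hxR).1.trans hut

theorem eq_access_of_mem (hT : IsGreedyRun n s T) (hR : IsTimeBlock s R i e) (hxR : x ∈ R)
    (hx : x ∈ T i) : x = s i := by
  obtain ⟨u, hui, rfl⟩ := hT.exists_access_le hx
  rw [hui.antisymm ((hR.mem_iff u).1 hxR).1]

/- Otherwise the key of `T i` nearest to `s i` towards `y` would hide `x` throughout the block. -/
theorem eq_of_mem_uIcc_of_notMem (hT : IsGreedyRun n s T) (hR : IsTimeBlock s R i e) (hit : i < t)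
    (hte : t < e) (hx : x ∈ T t) (hxR : x ∉ R) {u : ℕ} (hui : u < i) (hy : y ∈ T u)
    (hyx : y ∈ Set.uIcc (s i) x) : y = x := by
  have hiR : s i ∈ R := (hR.mem_iff i).2 ⟨le_rfl, hR.lt⟩
  induction t using Nat.strong_induction_on with
  | _ t ih =>
    have htR : s t ∈ R := (hR.mem_iff t).2 ⟨hit.le, hte⟩
    obtain ⟨u', hu't, hxu', hexp⟩ := hT.exposed_of_mem hx (ne_of_mem_of_not_mem htR hxR).symm
    by_cases hiu' : i < u'
    · exact ih u' hu't hiu' (hu't.trans hte) hxu'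
    obtain ⟨z, hzi, hzy, v, hvi, hzv⟩ := hT.exists_mem_uIcc hy hui (hit.trans (hT.lt_of_mem hx))
    have hzR : z ∉ R := fun hzR => (hT.le_of_mem hR hzR hzv).not_gt hvi
    have hzx : z = x := hexp i (not_lt.1 hiu') hit z
      (mem_uIcc_of_notMem hR.ordConnected hiR htR hzR (Set.uIcc_subset_uIcc_left hyx hzy)) hzi
    subst hzx
    rw [Set.uIcc_comm] at hyx hzy
    exact Set.eq_of_mem_uIcc_of_mem_uIcc hyx hzy

theorem exists_lt_mem_of_notMem (hT : IsGreedyRun n s T) (hR : IsTimeBlock s R i e) (hte : t < e)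
    (hx : x ∈ T t) (hxR : x ∉ R) : ∃ u < i, x ∈ T u := by
  obtain ⟨u, hut, rfl⟩ := hT.exists_access_le hx
  refine ⟨u, lt_of_not_ge fun hiu => hxR ((hR.mem_iff u).2 ⟨hiu, hut.trans_lt hte⟩), ?_⟩
  exact hT.access_mem (hut.trans_lt (hT.lt_of_mem hx))

theorem card_touched_notMem_le_two (hT : IsGreedyRun n s T) (hR : IsTimeBlock s R i e) :
    #{x ∈ (Ioo i e).biUnion T | x ∉ R} ≤ 2 := by
  set O : Finset K := {x ∈ (Ioo i e).biUnion T | x ∉ R} with hO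
  have heq : ∀ x ∈ O, ∀ y ∈ O, y ∈ Set.uIcc (s i) x → y = x := by
    intro x hx y hy hyx
    simp only [hO, mem_filter, mem_biUnion, mem_Ioo] at hx hy
    obtain ⟨⟨t, ⟨hit, hte⟩, hxt⟩, hxR⟩ := hx
    obtain ⟨⟨t', ⟨-, hte'⟩, hyt'⟩, hyR⟩ := hy
    obtain ⟨u, hui, hyu⟩ := hT.exists_lt_mem_of_notMem hR hte' hyt' hyR
    exact hT.eq_of_mem_uIcc_of_notMem hR hit hte hxt hxR hui hyu hyx
  have hlow : #{x ∈ O | x ≤ s i} ≤ 1 := by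
    refine card_le_one.2 fun x hx y hy => ?_
    simp only [mem_filter] at hx hy
    obtain h | h := le_total x y
    · exact (heq x hx.1 y hy.1 (Set.mem_uIcc.2 (Or.inr ⟨h, hy.2⟩))).symm
    · exact heq y hy.1 x hx.1 (Set.mem_uIcc.2 (Or.inr ⟨h, hx.2⟩))
  have hhigh : #{x ∈ O | ¬ x ≤ s i} ≤ 1 := by
    refine card_le_one.2 fun x hx y hy => ?_
    simp only [mem_filter, not_le] at hx hy
    obtain h | h := le_total x y
    · exact heq y hy.1 x hx.1 (Set.mem_uIcc.2 (Or.inl ⟨hx.2.le, h⟩))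
    · exact (heq x hx.1 y hy.1 (Set.mem_uIcc.2 (Or.inl ⟨hy.2.le, h⟩))).symm
  calc #O = #{x ∈ O | x ≤ s i} + #{x ∈ O | ¬ x ≤ s i} :=
        (card_filter_add_card_filter_not _).symm
    _ ≤ 1 + 1 := add_le_add hlow hhigh

theorem mem_visible_of_mem (hT : IsGreedyRun n s T) (hR : R.OrdConnected) (hst : s t ∉ R)
    (hxR : x ∈ R) (hx : x ∈ T t) : x ∈ visible T R t := by
  have hexp := hT.exposed_of_mem hx (ne_of_mem_of_not_mem hxR hst)
  refine mem_visible.2 ⟨hxR, (le_total (s t) x).imp (fun h => ?_) fun h => ?_⟩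
  · refine hexp.mono fun z ⟨hzR, hzx⟩ => Set.mem_uIcc.2 (Or.inl ⟨?_, hzx⟩)
    exact (le_total (s t) z).resolve_right fun hz => hst (hR.out hzR hxR ⟨hz, h⟩)
  · refine hexp.mono fun z ⟨hzR, hxz⟩ => Set.mem_uIcc.2 (Or.inr ⟨hxz, ?_⟩)
    exact (le_total z (s t)).resolve_right fun hz => hst (hR.out hxR hzR ⟨h, hz⟩)

theorem visible_succ_subset (hT : IsGreedyRun n s T) (hR : R.OrdConnected) (hst : s t ∉ R) :
    visible T R (t + 1) ⊆ visible T R t := by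
  intro x hx
  by_cases hxt : x ∈ T t
  · exact hT.mem_visible_of_mem hR hst (mem_of_mem_visible hx) hxt
  · refine mem_visible_of_notMem hx t.le_succ fun v hv hv' => ?_
    rwa [← hv.antisymm (Nat.le_of_lt_succ hv')]

theorem visible_subset_of_le (hT : IsGreedyRun n s T) (hR : R.OrdConnected) (hie : i ≤ e)
    (hs : ∀ t, i ≤ t → t < e → s t ∉ R) : visible T R e ⊆ visible T R i := by
  induction e, hie using Nat.le_induction with
  | base => exact Subset.rfl
  | succ e hie ih =>
    exact (hT.visible_succ_subset hR (hs e hie e.lt_succ_self)).trans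
      (ih fun t hit hte => hs t hit (hte.trans e.lt_succ_self))

theorem card_image_touched_add_le (hT : IsGreedyRun n s T) (hR : R.OrdConnected) {col : K → ι}
    (hcol : ∀ q, (R ∩ col ⁻¹' {q}).OrdConnected) (hst : s t ∉ R) :
    #((touched T R t).image col) + #((visible T R (t + 1)).image col) ≤
      #((visible T R t).image col) + 2 := by
  have htouched : touched T R t ⊆ visible T R t := fun x hx =>
    hT.mem_visible_of_mem hR hst (mem_touched.1 hx).2 (mem_touched.1 hx).1
  rw [← card_union_add_card_inter]
  refine add_le_add (card_le_card (union_subset ?_ ?_))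
    (card_image_inter_image_visible_le_two hcol)
  · exact image_subset_image htouched
  · exact image_subset_image (hT.visible_succ_subset hR hst)

theorem card_image_visible_le_of_isTimeBlock (hT : IsGreedyRun n s T) {col : K → ι}
    (hcol : ∀ q, (R ∩ col ⁻¹' {q}).OrdConnected) {P : Set K} (hP : IsTimeBlock s P i e) {q : ι}
    (hq : ∀ x ∈ P, col x = q) :
    #((visible T R e).image col) ≤ #((visible T R i).image col) + 5 := by
  set O : Finset K := {x ∈ (Ioo i e).biUnion T | x ∉ P}
  have hsub : (visible T R e).image col ⊆
      (visible T R (i + 1)).image col ∪ (O.image col ∪ {q}) := by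
    intro p hp
    obtain ⟨x, hx, rfl⟩ := mem_image.1 hp
    by_cases htouched : ∃ t ∈ Ioo i e, x ∈ T t
    · refine mem_union_right _ (mem_union.2 ?_)
      by_cases hxP : x ∈ P
      · exact Or.inr (mem_singleton.2 (hq x hxP))
      · exact Or.inl (mem_image_of_mem col (mem_filter.2 ⟨mem_biUnion.2 htouched, hxP⟩))
    · refine mem_union_left _ (mem_image_of_mem col (mem_visible_of_notMem hx hP.lt ?_))
      exact fun t hit hte hxt => htouched ⟨t, mem_Ioo.2 ⟨hit, hte⟩, hxt⟩
  have hO2 : #(O.image col) ≤ 2 := card_image_le.trans (hT.card_touched_notMem_le_two hP)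
  calc #((visible T R e).image col)
      ≤ #((visible T R (i + 1)).image col) + (#(O.image col) + #{q}) :=
        (card_le_card hsub).trans ((card_union_le _ _).trans
          (Nat.add_le_add_left (card_union_le _ _) _))
    _ ≤ (#((visible T R i).image col) + 2) + (2 + 1) :=
        add_le_add (card_image_visible_succ_le hcol) (add_le_add hO2 (card_singleton q).le)

end IsGreedyRun

/-! ### Partitions of a block -/

/-- The interval `R`, accessed at the times of `[i, e)`, is partitioned by the colouring `col` into
intervals, one for each colour `q ∈ Q`, the part of colour `q` being accessed at the times of
`[st q, en q)`. -/
structure IsBlockPartition {K ι : Type*} [LinearOrder K] (s : ℕ → K) (R : Set K) (i e : ℕ)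
    (col : K → ι) (Q : Finset ι) (st en : ι → ℕ) : Prop where
  isTimeBlock : IsTimeBlock s R i e
  col_mem : ∀ x ∈ R, col x ∈ Q
  part : ∀ q ∈ Q, IsTimeBlock s (R ∩ col ⁻¹' {q}) (st q) (en q)

namespace IsBlockPartition

variable {K ι : Type*} [LinearOrder K] {s : ℕ → K} {R : Set K} {i e t : ℕ}
  {col : K → ι} {Q : Finset ι} {st en : ι → ℕ} {q : ι}

theorem ordConnected_fibre (hP : IsBlockPartition s R i e col Q st en) (q : ι) :
    (R ∩ col ⁻¹' {q}).OrdConnected := by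
  by_cases hq : q ∈ Q
  · exact (hP.part q hq).ordConnected
  · have hempty : R ∩ col ⁻¹' {q} = ∅ :=
      Set.eq_empty_of_forall_notMem fun x hx => hq (hx.2 ▸ hP.col_mem x hx.1)
    rw [hempty]
    exact Set.ordConnected_empty

theorem col_access_eq (hP : IsBlockPartition s R i e col Q st en) (hq : q ∈ Q) (hst : st q ≤ t)
    (hen : t < en q) : col (s t) = q :=
  (((hP.part q hq).mem_iff t).2 ⟨hst, hen⟩).2

theorem Ico_eq_filter (hP : IsBlockPartition s R i e col Q st en) (hq : q ∈ Q) :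
    Ico (st q) (en q) = {t ∈ Ico i e | col (s t) = q} := by
  ext t
  rw [mem_filter, mem_Ico, mem_Ico, ← (hP.part q hq).mem_iff, ← hP.isTimeBlock.mem_iff]
  rfl

theorem sum_sum_Ico {M : Type*} [AddCommMonoid M] (hP : IsBlockPartition s R i e col Q st en)
    (f : ℕ → M) : ∑ q ∈ Q, ∑ t ∈ Ico (st q) (en q), f t = ∑ t ∈ Ico i e, f t := by
  rw [← sum_fiberwise_of_maps_to (g := fun t => col (s t))
    (fun t ht => hP.col_mem _ ((hP.isTimeBlock.mem_iff t).2 (mem_Ico.1 ht)))]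
  exact sum_congr rfl fun q hq => by rw [hP.Ico_eq_filter hq]

theorem le_add_sum_of_forall_part (hP : IsBlockPartition s R i e col Q st en) {f : ℕ → ℕ}
    {b : ι → ℤ} (hf : ∀ q ∈ Q, (f (en q) : ℤ) ≤ f (st q) + b q) :
    (f e : ℤ) ≤ f i + ∑ q ∈ Q, b q := by
  have htelescope : ∑ q ∈ Q, ((f (en q) : ℤ) - f (st q)) = f e - f i := by
    rw [← sum_Ico_sub (fun t => (f t : ℤ)) hP.isTimeBlock.lt.le, ← hP.sum_sum_Ico]
    exact sum_congr rfl fun q hq =>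
      (sum_Ico_sub (fun t => (f t : ℤ)) (hP.part q hq).lt.le).symm
  have hle : ∑ q ∈ Q, ((f (en q) : ℤ) - f (st q)) ≤ ∑ q ∈ Q, b q :=
    sum_le_sum fun q hq => by linarith [hf q hq]
  linarith

end IsBlockPartition

namespace IsGreedyRun

variable {K ι κ : Type*} [LinearOrder K] {n : ℕ} {s : ℕ → K} {T : ℕ → Finset K} {R : Set K}
  {i e t : ℕ} {col : K → ι} {Q D F : Finset ι} {st en : ι → ℕ} {q : ι}

theorem visible_start_eq_empty (hT : IsGreedyRun n s T) (hR : IsTimeBlock s R i e) {R' : Set K}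
    (hR' : R' ⊆ R) : visible T R' i = ∅ := by
  refine eq_empty_of_forall_notMem fun x hx => ?_
  obtain ⟨u, hui, hxu⟩ := exists_mem_of_mem_visible hx
  exact (hT.le_of_mem hR (hR' (mem_of_mem_visible hx)) hxu).not_gt hui

theorem card_image_touched_add_le_of_isTimeBlock (hT : IsGreedyRun n s T) (hR : R.OrdConnected)
    {c : K → κ} (hc : ∀ p, (R ∩ c ⁻¹' {p}).OrdConnected) (hie : i < e)
    (hs : ∀ t, i ≤ t → t < e → s t ∉ R) :
    #((touched T R i).image c) + #((visible T R e).image c) ≤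
      #((visible T R i).image c) + if (touched T R i).Nonempty then 2 else 0 := by
  split_ifs with h
  · have hmono : #((visible T R e).image c) ≤ #((visible T R (i + 1)).image c) :=
      card_le_card (image_subset_image
        (hT.visible_subset_of_le hR hie fun t hit => hs t (Nat.le_of_succ_le hit)))
    linarith [hT.card_image_touched_add_le hR hc (hs i le_rfl hie)]
  · rw [not_nonempty_iff_eq_empty.1 h, image_empty, card_empty, zero_add]
    exact card_le_card (image_subset_image (hT.visible_subset_of_le hR hie.le hs))

/- The number of visible colours is a potential: it drops by what the accesses of the parts in `D`
touch, up to two, and grows only while the parts in `F` are processed. -/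
theorem sum_card_image_touched_le (hT : IsGreedyRun n s T)
    (hP : IsBlockPartition s R i e col Q st en) (hD : D ⊆ Q) (hF : F ⊆ Q) (hDF : Disjoint D F)
    {R' : Set K} (hR' : R'.OrdConnected) (hR'R : R' ⊆ R) (hR'F : ∀ x ∈ R', col x ∈ F)
    {c : K → κ} (hc : ∀ p, (R' ∩ c ⁻¹' {p}).OrdConnected) {b : ι → ℕ}
    (hb : ∀ q ∈ F, #((visible T R' (en q)).image c) ≤ #((visible T R' (st q)).image c) + b q) :
    ∑ q ∈ D, #((touched T R' (st q)).image c) + #((visible T R' e).image c) ≤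
      2 * #{q ∈ D | (touched T R' (st q)).Nonempty} + ∑ q ∈ F, b q := by
  set W : ℕ → ℕ := fun t => #((visible T R' t).image c) with hW
  set X : ι → ℕ := fun q => #((touched T R' (st q)).image c)
  set δ : ι → ℕ := fun q => if (touched T R' (st q)).Nonempty then 2 else 0
  have hpart : ∀ q ∈ Q, (W (en q) : ℤ) ≤ W (st q) +
      ((if q ∈ F then (b q : ℤ) else 0) + if q ∈ D then (δ q : ℤ) - X q else 0) := by
    intro q hq
    by_cases hqF : q ∈ F
    · rw [if_pos hqF, if_neg (disjoint_right.1 hDF hqF), add_zero]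
      exact_mod_cast hb q hqF
    have hst : ∀ t, st q ≤ t → t < en q → s t ∉ R' := fun t hst hen ht =>
      hqF (hP.col_access_eq hq hst hen ▸ hR'F _ ht)
    have hmono : W (en q) ≤ W (st q) := card_le_card (image_subset_image
      (hT.visible_subset_of_le hR' (hP.part q hq).lt.le hst))
    have hstep : X q + W (en q) ≤ W (st q) + δ q :=
      hT.card_image_touched_add_le_of_isTimeBlock hR' hc (hP.part q hq).lt hst
    rw [if_neg hqF]
    split_ifs <;> omega
  have hWi : W i = 0 := by
    simp only [hW, hT.visible_start_eq_empty hP.isTimeBlock hR'R, image_empty, card_empty]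
  have hsum := hP.le_add_sum_of_forall_part hpart
  have hδ : ∑ q ∈ D, δ q = 2 * #{q ∈ D | (touched T R' (st q)).Nonempty} := by
    rw [← sum_filter, sum_const, smul_eq_mul, mul_comm]
  rw [hWi, Nat.cast_zero, sum_add_distrib, sum_ite_mem, sum_ite_mem, inter_eq_right.2 hF,
    inter_eq_right.2 hD, sum_sub_distrib] at hsum
  rw [← hδ]
  change ∑ q ∈ D, X q + W e ≤ _
  zify
  linarith

theorem sum_card_touched_colours_inter_le (hT : IsGreedyRun n s T)
    (hP : IsBlockPartition s R i e col Q st en) (hD : D ⊆ Q) (hF : F ⊆ Q) (hDF : Disjoint D F)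
    (hRF : (R ∩ col ⁻¹' F).OrdConnected) :
    ∑ q ∈ D, #((touched T R (st q)).image col ∩ F) ≤ 5 * (#D + #F) := by
  have hc : ∀ q, (R ∩ col ⁻¹' F ∩ col ⁻¹' {q}).OrdConnected := fun q => by
    rw [← Set.inter_eq_self_of_subset_left (Set.inter_subset_left : R ∩ col ⁻¹' (F : Set ι) ⊆ R),
      Set.inter_assoc]
    exact hRF.inter (hP.ordConnected_fibre q)
  have hsum := hT.sum_card_image_touched_le hP hD hF hDF hRF Set.inter_subset_left
    (fun x hx => hx.2) hc (b := fun _ => 5)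
    fun q hq => hT.card_image_visible_le_of_isTimeBlock hc (hP.part q (hF hq)) fun x hx => hx.2
  have hrow : ∀ q ∈ D, #((touched T R (st q)).image col ∩ F) ≤
      #((touched T (R ∩ col ⁻¹' F) (st q)).image col) := by
    refine fun q _ => card_le_card fun q' hq' => ?_
    obtain ⟨hq', hq'F⟩ := mem_inter.1 hq'
    obtain ⟨x, hx, rfl⟩ := mem_image.1 hq'
    obtain ⟨hxt, hxR⟩ := mem_touched.1 hx
    exact mem_image_of_mem col (mem_touched.2 ⟨hxt, hxR, hq'F⟩)
  have hle : #{q ∈ D | (touched T (R ∩ col ⁻¹' F) (st q)).Nonempty} ≤ #D := card_filter_le _ _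
  rw [sum_const, smul_eq_mul] at hsum
  linarith [sum_le_sum hrow]

theorem card_touched_part_add_card_visible_le (hT : IsGreedyRun n s T)
    (hP : IsBlockPartition s R i e col Q st en) (hq : q ∈ Q) :
    ∑ p ∈ Q, #(touched T (R ∩ col ⁻¹' {q}) (st p)) + #(visible T (R ∩ col ⁻¹' {q}) e) ≤
      #(visible T (R ∩ col ⁻¹' {q}) (en q)) +
        2 * #{p ∈ Q | q ∈ (touched T R (st p)).image col} + 1 := by
  have hR' := (hP.part q hq).ordConnected
  have hsum := hT.sum_card_image_touched_le hP (erase_subset q Q) (singleton_subset_iff.2 hq)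
    (disjoint_singleton_right.2 (notMem_erase q Q)) hR' Set.inter_subset_left
    (fun x hx => mem_singleton.2 hx.2) (c := id)
    (fun p => hR'.inter Set.ordConnected_singleton)
    (b := fun q => #(visible T (R ∩ col ⁻¹' {q}) (en q))) fun p hp => by
      obtain rfl := mem_singleton.1 hp
      rw [image_id]
      exact Nat.le_add_left _ _
  simp only [image_id, sum_singleton] at hsum
  have hdiag : #(touched T (R ∩ col ⁻¹' {q}) (st q)) ≤ 1 := by
    refine card_le_one.2 fun x hx y hy => ?_
    rw [mem_touched] at hx hy
    rw [hT.eq_access_of_mem (hP.part q hq) hx.2 hx.1, hT.eq_access_of_mem (hP.part q hq) hy.2 hy.1]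
  have hmono : #{p ∈ Q.erase q | (touched T (R ∩ col ⁻¹' {q}) (st p)).Nonempty} ≤
      #{p ∈ Q | q ∈ (touched T R (st p)).image col} := by
    refine card_le_card fun p hp => ?_
    obtain ⟨hpQ, x, hx⟩ := mem_filter.1 hp
    obtain ⟨hxt, hxR, rfl⟩ := mem_touched.1 hx
    exact mem_filter.2 ⟨mem_of_mem_erase hpQ, mem_image_of_mem col (mem_touched.2 ⟨hxt, hxR⟩)⟩
  rw [← add_sum_erase Q _ hq]
  linarith

end IsGreedyRun

section Halving

variable {ι α : Type*} [LinearOrder α] {f : ι → α} {Q F : Finset ι}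

theorem exists_card_filter_lt_eq (hf : Set.InjOn f Q) {k : ℕ} (hk : k < #Q) :
    ∃ z ∈ Q, #{x ∈ Q | f x < f z} = k := by
  set rank : ι → ℕ := fun z => #{x ∈ Q | f x < f z}
  have hmono : ∀ x ∈ Q, ∀ y, f x < f y → rank x < rank y := fun x hx y hxy =>
    card_lt_card <| (ssubset_iff_of_subset
      (monotone_filter_right _ fun _ _ h => h.trans hxy)).2
        ⟨x, mem_filter.2 ⟨hx, hxy⟩, fun h => lt_irrefl _ (mem_filter.1 h).2⟩
  have hmaps : Set.MapsTo rank Q (range #Q) := fun z hz => mem_coe.2 <| mem_range.2 <|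
    card_lt_card <| filter_ssubset.2 ⟨z, hz, lt_irrefl _⟩
  have hinj : Set.InjOn rank Q := fun x hx y hy hxy => hf hx hy <| by
    by_contra hne
    obtain h | h := lt_or_gt_of_ne hne
    · exact (hmono x hx y h).ne hxy
    · exact (hmono y hy x h).ne hxy.symm
  exact surjOn_of_injOn_of_card_le rank hmaps hinj (card_range _).le (mem_coe.2 (mem_range.2 hk))

/-- The elements of `B` form an interval of `Q` in the order induced by `f`. -/
def IsIntervalOf (f : ι → α) (Q B : Finset ι) : Prop :=
  B ⊆ Q ∧ ∀ x ∈ B, ∀ y ∈ B, ∀ z ∈ Q, f x ≤ f z → f z ≤ f y → z ∈ B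

theorem IsIntervalOf.filter_lt (hF : IsIntervalOf f Q F) (a : α) :
    IsIntervalOf f Q {x ∈ F | f x < a} := by
  refine ⟨(filter_subset _ F).trans hF.1, fun x hx y hy z hz hxz hzy => ?_⟩
  rw [mem_filter] at hx hy ⊢
  exact ⟨hF.2 x hx.1 y hy.1 z hz hxz hzy, hzy.trans_lt hy.2⟩

theorem IsIntervalOf.filter_not_lt (hF : IsIntervalOf f Q F) (a : α) :
    IsIntervalOf f Q {x ∈ F | ¬ f x < a} := by
  refine ⟨(filter_subset _ F).trans hF.1, fun x hx y hy z hz hxz hzy => ?_⟩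
  rw [mem_filter, not_lt] at hx hy ⊢
  exact ⟨hF.2 x hx.1 y hy.1 z hz hxz hzy, hx.2.trans hxz⟩

theorem sum_union_card_inter_union_le (M : ι → Finset ι) {A B : Finset ι} (hAB : Disjoint A B) :
    ∑ p ∈ A ∪ B, #(M p ∩ (A ∪ B)) ≤
      (∑ p ∈ A, #(M p ∩ A) + ∑ p ∈ A, #(M p ∩ B)) +
        (∑ p ∈ B, #(M p ∩ A) + ∑ p ∈ B, #(M p ∩ B)) := by
  rw [sum_union hAB, ← sum_add_distrib, ← sum_add_distrib]
  simp only [inter_union_distrib_left]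
  exact add_le_add (sum_le_sum fun p _ => card_union_le _ _)
    (sum_le_sum fun p _ => card_union_le _ _)

theorem sum_card_inter_le_of_halving (hf : Set.InjOn f Q) {M : ι → Finset ι} {c : ℕ}
    (hM : ∀ A ⊆ Q, ∀ B, IsIntervalOf f Q B → Disjoint A B →
      ∑ p ∈ A, #(M p ∩ B) ≤ c * (#A + #B))
    (h : ℕ) (hF : IsIntervalOf f Q F) (hcard : #F ≤ 2 ^ h) :
    ∑ p ∈ F, #(M p ∩ F) ≤ (2 * c * h + 1) * #F := by
  induction h generalizing F with
  | zero =>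
    have hle : ∀ p ∈ F, #(M p ∩ F) ≤ 1 := fun p _ => (card_le_card inter_subset_right).trans hcard
    simpa only [mul_zero, zero_add, one_mul, mul_one, smul_eq_mul] using
      sum_le_card_nsmul F _ 1 hle
  | succ h ih =>
    obtain rfl | hne := F.eq_empty_or_nonempty
    · simp only [sum_empty, Nat.zero_le]
    obtain ⟨z, -, hz⟩ := exists_card_filter_lt_eq (hf.mono (coe_subset.2 hF.1))
      (Nat.div_lt_self hne.card_pos one_lt_two)
    set A : Finset ι := {x ∈ F | f x < f z}
    set B : Finset ι := {x ∈ F | ¬ f x < f z}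
    have hA : IsIntervalOf f Q A := hF.filter_lt (f z)
    have hB : IsIntervalOf f Q B := hF.filter_not_lt (f z)
    have hAB : Disjoint A B := disjoint_filter_filter_not F F _
    have hFAB : A ∪ B = F := filter_union_filter_not_eq _ F
    have hcardF : #A + #B = #F := card_filter_add_card_filter_not _
    rw [pow_succ] at hcard
    calc ∑ p ∈ F, #(M p ∩ F)
        ≤ (∑ p ∈ A, #(M p ∩ A) + ∑ p ∈ A, #(M p ∩ B)) +
            (∑ p ∈ B, #(M p ∩ A) + ∑ p ∈ B, #(M p ∩ B)) :=
          hFAB ▸ sum_union_card_inter_union_le M hAB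
      _ ≤ ((2 * c * h + 1) * #A + c * (#A + #B)) + (c * (#B + #A) + (2 * c * h + 1) * #B) :=
          add_le_add (add_le_add (ih hA (by omega)) (hM A hA.1 B hB hAB))
            (add_le_add (hM B hB.1 A hA hAB.symm) (ih hB (by omega)))
      _ = (2 * c * (h + 1) + 1) * #F := by rw [← hcardF]; ring

end Halving

namespace IsBlockPartition

variable {K ι : Type*} [LinearOrder K] {s : ℕ → K} {R : Set K} {i e : ℕ} {col : K → ι}
  {Q : Finset ι} {st en : ι → ℕ}

theorem access_start_mem (hP : IsBlockPartition s R i e col Q st en) {q : ι} (hq : q ∈ Q) :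
    s (st q) ∈ R ∩ col ⁻¹' {q} :=
  ((hP.part q hq).mem_iff _).2 ⟨le_rfl, (hP.part q hq).lt⟩

theorem injOn_access_start (hP : IsBlockPartition s R i e col Q st en) :
    Set.InjOn (fun q => s (st q)) Q := fun p hp q hq hpq => by
  rw [← (hP.access_start_mem hp).2, ← (hP.access_start_mem hq).2]
  exact congrArg col hpq

theorem monotoneOn_access_start (hP : IsBlockPartition s R i e col Q st en) :
    MonotoneOn (fun x => s (st (col x))) R := by
  intro x hx y hy hxy
  obtain ⟨hxR, hxcol⟩ := hP.access_start_mem (hP.col_mem x hx)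
  obtain ⟨hyR, hycol⟩ := hP.access_start_mem (hP.col_mem y hy)
  by_contra! hlt
  have hcol : col x = col (s (st (col y))) :=
    col_eq_of_crossing hP.ordConnected_fibre hxR hx hy hyR hxcol hycol.symm hxy hlt.le
  refine hlt.ne' ?_
  simp only [hcol.trans hycol]

theorem ordConnected_preimage (hP : IsBlockPartition s R i e col Q st en) {F : Finset ι}
    (hF : IsIntervalOf (fun q => s (st q)) Q F) : (R ∩ col ⁻¹' F).OrdConnected := by
  refine ⟨fun x hx y hy z hz => ?_⟩
  have hzR : z ∈ R := hP.isTimeBlock.ordConnected.out hx.1 hy.1 hz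
  exact ⟨hzR, hF.2 _ hx.2 _ hy.2 _ (hP.col_mem z hzR)
    (hP.monotoneOn_access_start hx.1 hzR hz.1) (hP.monotoneOn_access_start hzR hy.1 hz.2)⟩

theorem sum_Ioo_le (hP : IsBlockPartition s R i e col Q st en) (f : ℕ → ℕ) :
    ∑ t ∈ Ioo i e, f t ≤ ∑ q ∈ Q, ((if st q = i then 0 else f (st q)) +
      ∑ t ∈ Ioo (st q) (en q), f t) := by
  calc ∑ t ∈ Ioo i e, f t
      = ∑ t ∈ Ico i e, if t = i then 0 else f t := by
        rw [← Ioo_insert_left hP.isTimeBlock.lt, sum_insert left_notMem_Ioo, if_pos rfl, zero_add]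
        exact sum_congr rfl fun t ht => (if_neg (mem_Ioo.1 ht).1.ne').symm
    _ = ∑ q ∈ Q, ∑ t ∈ Ico (st q) (en q), if t = i then 0 else f t := (hP.sum_sum_Ico _).symm
    _ ≤ _ := sum_le_sum fun q hq => by
        rw [← Ioo_insert_left (hP.part q hq).lt, sum_insert left_notMem_Ioo]
        refine Nat.add_le_add_left (sum_le_sum fun t _ => ?_) _
        split_ifs
        exacts [Nat.zero_le _, le_rfl]

theorem card_visible_le_sum (T : ℕ → Finset K) (hP : IsBlockPartition s R i e col Q st en) :
    #(visible T R e) ≤ ∑ q ∈ Q, #(visible T (R ∩ col ⁻¹' {q}) e) := by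
  refine (card_le_card fun x hx => ?_).trans card_biUnion_le
  obtain ⟨hxR, hexp⟩ := mem_visible.1 hx
  have hsub : R ∩ col ⁻¹' {col x} ⊆ R := Set.inter_subset_left
  exact mem_biUnion.2 ⟨col x, hP.col_mem x hxR, mem_visible.2 ⟨⟨hxR, rfl⟩,
    hexp.imp (·.mono (Set.inter_subset_inter_left _ hsub))
      (·.mono (Set.inter_subset_inter_left _ hsub))⟩⟩

end IsBlockPartition

/-! ### The potential of a block -/

/-- The potential of a block `R` accessed at the times of `[i, e)`: the number of touches after its
first access, together with the number of its keys visible afterwards. -/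
noncomputable def blockPotential {K : Type*} [LinearOrder K] (T : ℕ → Finset K) (R : Set K)
    (i e : ℕ) : ℕ :=
  ∑ t ∈ Ioo i e, #(T t) + #(visible T R e)

namespace IsGreedyRun

variable {K ι : Type*} [LinearOrder K] {n : ℕ} {s : ℕ → K} {T : ℕ → Finset K} {R : Set K}
  {i e t : ℕ} {col : K → ι} {Q : Finset ι} {st en : ι → ℕ}

theorem card_le_two_add_sum_card_touched (hT : IsGreedyRun n s T)
    (hP : IsBlockPartition s R i e col Q st en) (ht : t ∈ Ioo i e) :
    #(T t) ≤ 2 + ∑ q ∈ Q, #(touched T (R ∩ col ⁻¹' {q}) t) := by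
  have houtside : #{x ∈ T t | x ∉ R} ≤ 2 := (card_le_card (filter_subset_filter _
    (subset_biUnion_of_mem T ht))).trans (hT.card_touched_notMem_le_two hP.isTimeBlock)
  have hinside : #{x ∈ T t | x ∈ R} = ∑ q ∈ Q, #(touched T (R ∩ col ⁻¹' {q}) t) := by
    rw [card_eq_sum_card_fiberwise fun x hx => hP.col_mem x (mem_filter.1 hx).2]
    refine sum_congr rfl fun q _ => congrArg card ?_
    ext x
    simp only [mem_filter, mem_touched, Set.mem_inter_iff, Set.mem_preimage,
      Set.mem_singleton_iff, and_assoc]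
  rw [← card_filter_add_card_filter_not (fun x => x ∈ R), hinside, add_comm]
  exact Nat.add_le_add_right houtside _

theorem sum_card_touched_colours_le (hT : IsGreedyRun n s T)
    (hP : IsBlockPartition s R i e col Q st en) {h : ℕ} (hQ : #Q ≤ 2 ^ h) :
    ∑ q ∈ Q, #((touched T R (st q)).image col ∩ Q) ≤ (10 * h + 1) * #Q :=
  sum_card_inter_le_of_halving hP.injOn_access_start
    (fun _ hA _ hB hAB => hT.sum_card_touched_colours_inter_le hP hA hB.1 hAB
      (hP.ordConnected_preimage hB)) h ⟨Subset.rfl, fun _ _ _ _ _ hz _ _ => hz⟩ hQ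

theorem blockPotential_le_sum (hT : IsGreedyRun n s T)
    (hP : IsBlockPartition s R i e col Q st en) {h : ℕ} (hQ : #Q ≤ 2 ^ h) :
    blockPotential T R i e ≤
      ∑ q ∈ Q, blockPotential T (R ∩ col ⁻¹' {q}) (st q) (en q) + (5 + 20 * h) * #Q := by
  have hstart : ∀ q ∈ Q, (if st q = i then 0 else #(T (st q))) ≤
      2 + ∑ q' ∈ Q, #(touched T (R ∩ col ⁻¹' {q'}) (st q)) := by
    intro q hq
    split_ifs with hi
    · exact Nat.zero_le _
    · have hst := (hP.isTimeBlock.mem_iff _).1 (hP.access_start_mem hq).1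
      exact hT.card_le_two_add_sum_card_touched hP
        (mem_Ioo.2 ⟨lt_of_le_of_ne hst.1 (Ne.symm hi), hst.2⟩)
  have hinner := (hP.sum_Ioo_le fun t => #(T t)).trans
    (sum_le_sum fun q hq => Nat.add_le_add_right (hstart q hq) _)
  have hamortised := sum_le_sum fun q hq => hT.card_touched_part_add_card_visible_le hP (q := q) hq
  have hpairs : ∑ q ∈ Q, #{p ∈ Q | q ∈ (touched T R (st p)).image col} =
      ∑ p ∈ Q, #((touched T R (st p)).image col ∩ Q) := by
    simp only [inter_comm _ Q, ← filter_mem_eq_inter]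
    exact (sum_card_bipartiteAbove_eq_sum_card_bipartiteBelow _).symm
  have hvisible := hP.card_visible_le_sum T
  have hM := hT.sum_card_touched_colours_le hP hQ
  simp only [sum_add_distrib, sum_const, smul_eq_mul, ← mul_sum, hpairs] at hinner hamortised
  rw [sum_comm] at hamortised
  simp only [blockPotential, sum_add_distrib]
  linarith

end IsGreedyRun

/-! ### The execution of GREEDY -/

theorem mem_greedyStep {X G : Finset Pt} {t : ℤ} {p : Pt} : p ∈ greedyStep X G t ↔
    p.2 = t ∧ ∃ x, (x, t) ∈ X ∧ p.1 ≠ x ∧ ∃ u < t, (p.1, u) ∈ X ∪ G ∧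
      ∀ r ∈ X ∪ G, r.2 < t → inRect (x, t) (p.1, u) r → r = (p.1, u) := by
  simp only [greedyStep, mem_biUnion, mem_filter, mem_image]
  constructor
  · rintro ⟨⟨x, _⟩, ⟨hx, rfl⟩, ⟨y, u⟩, ⟨⟨hq, hu⟩, hne, h⟩, rfl⟩
    exact ⟨rfl, x, hx, hne, u, hu, hq, fun r hr hrt => h r ⟨hr, hrt⟩⟩
  · rintro ⟨ht, x, hx, hne, u, hu, hq, h⟩
    exact ⟨(x, t), ⟨hx, rfl⟩, (p.1, u), ⟨⟨hq, hu⟩, hne, fun r hr => h r hr.1 hr.2⟩,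
      Prod.ext rfl ht.symm⟩

theorem mem_greedyUpTo {X : Finset Pt} {m : ℕ} {p : Pt} : p ∈ greedyUpTo X m ↔
    ∃ t < m, p ∈ greedyStep X (greedyUpTo X t) ((t : ℤ) + 1) := by
  induction m with
  | zero => simp [greedyUpTo]
  | succ m ih =>
    rw [greedyUpTo, mem_union, ih, Nat.exists_lt_succ_right]

theorem mem_greedyUpTo_iff_mem_greedyG {n t : ℕ} {X : Finset Pt} (ht : t ≤ n) {p : Pt}
    (hp : p.2 < (t : ℤ) + 1) : p ∈ greedyUpTo X t ↔ p ∈ greedyG n X := by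
  simp only [greedyG, mem_greedyUpTo]
  refine exists_congr fun u => and_congr_left fun hu => ⟨fun hut => hut.trans_le ht, fun _ => ?_⟩
  have := (mem_greedyStep.1 hu).1
  omega

theorem inRect_iff_mem_uIcc {a x y : ℤ} {t u v : ℕ} (hu : u < t) (hv : v < t) :
    inRect (a, (t : ℤ) + 1) (x, (u : ℤ) + 1) (y, (v : ℤ) + 1) ↔ y ∈ Set.uIcc a x ∧ u ≤ v := by
  simp only [inRect, Set.uIcc, Set.mem_Icc]
  omega

/-- The keys touched by GREEDY at the access of index `t`. Accesses are indexed from `0`, so that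
this access takes place at time `t + 1`. -/
noncomputable def greedyTouched (n : ℕ) (X : Finset Pt) (t : ℕ) : Finset ℤ :=
  {p ∈ X ∪ greedyG n X | p.2 = (t : ℤ) + 1}.image Prod.fst

theorem mem_greedyTouched {n t : ℕ} {X : Finset Pt} {x : ℤ} :
    x ∈ greedyTouched n X t ↔ (x, (t : ℤ) + 1) ∈ X ∪ greedyG n X := by
  simp only [greedyTouched, mem_image, mem_filter]
  constructor
  · rintro ⟨⟨y, w⟩, ⟨hp, rfl⟩, rfl⟩
    exact hp
  · exact fun hp => ⟨_, ⟨hp, rfl⟩, rfl⟩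

/-- The set of keys of the points of `B`. -/
def keys (B : Finset Pt) : Set ℤ := Prod.fst '' (B : Set Pt)

theorem keys_mono {B C : Finset Pt} (h : C ⊆ B) : keys C ⊆ keys B :=
  Set.image_mono (coe_subset.2 h)

theorem IsBlock.ordConnected_keys {X B : Finset Pt} (hB : IsBlock X B) :
    (keys B).OrdConnected := by
  obtain ⟨-, -, c, d, hkeys⟩ := hB
  rw [keys, ← coe_image, hkeys, coe_Icc]
  exact Set.ordConnected_Icc

/-- `s` enumerates the keys of the points of `X` in the order of their times `1, …, n`. It is
extended to an injective sequence beyond `n`, so that no key of `X` is accessed again. -/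
structure IsAccessSeq (n : ℕ) (X : Finset Pt) (s : ℕ → ℤ) : Prop where
  injective : Function.Injective s
  mem_iff : ∀ p : Pt, p ∈ X ↔ ∃ t < n, p = (s t, (t : ℤ) + 1)

theorem IsPermPointSet.exists_isAccessSeq {n : ℕ} {X : Finset Pt} (hX : IsPermPointSet n X) :
    ∃ s, IsAccessSeq n X s := by
  obtain ⟨σ, rfl⟩ := hX
  refine ⟨fun t => (if h : t < n then (σ ⟨t, h⟩ : ℕ) else t : ℕ) + 1, fun t t' h => ?_, ?_⟩
  · simp only [add_left_inj, Nat.cast_inj] at h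
    split_ifs at h with ht ht' ht'
    · simpa using σ.injective (Fin.ext h)
    · exact absurd (h ▸ (σ ⟨t, ht⟩).2) ht'
    · exact absurd (h ▸ (σ ⟨t', ht'⟩).2) ht
    · exact h
  · intro p
    simp only [mem_image, mem_univ, true_and]
    constructor
    · rintro ⟨t, rfl⟩
      exact ⟨t, t.2, by simp⟩
    · rintro ⟨t, ht, rfl⟩
      exact ⟨⟨t, ht⟩, by simp [ht]⟩

namespace IsAccessSeq

variable {n : ℕ} {X B : Finset Pt} {s : ℕ → ℤ} {t : ℕ} {x : ℤ}

theorem mk_mem_iff (hs : IsAccessSeq n X s) : (x, (t : ℤ) + 1) ∈ X ↔ t < n ∧ x = s t := by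
  rw [hs.mem_iff]
  constructor
  · rintro ⟨u, hu, h⟩
    simp only [Prod.mk.injEq, add_left_inj, Nat.cast_inj] at h
    obtain ⟨rfl, rfl⟩ := h
    exact ⟨hu, rfl⟩
  · rintro ⟨ht, rfl⟩
    exact ⟨t, ht, rfl⟩

theorem eq_of_fst_eq (hs : IsAccessSeq n X s) {p q : Pt} (hp : p ∈ X) (hq : q ∈ X)
    (h : p.1 = q.1) : p = q := by
  obtain ⟨t, -, rfl⟩ := (hs.mem_iff p).1 hp
  obtain ⟨u, -, rfl⟩ := (hs.mem_iff q).1 hq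
  rw [hs.injective h]

theorem card_le (hs : IsAccessSeq n X s) : #X ≤ n := by
  have hsub : X ⊆ (range n).image fun t => ((s t, (t : ℤ) + 1) : Pt) := fun p hp => by
    obtain ⟨t, ht, rfl⟩ := (hs.mem_iff p).1 hp
    exact mem_image_of_mem _ (mem_range.2 ht)
  exact (card_le_card hsub).trans (card_image_le.trans (card_range n).le)

theorem exists_time (hs : IsAccessSeq n X s) {p : Pt} (hp : p ∈ X ∪ greedyG n X) :
    ∃ t < n, p.2 = (t : ℤ) + 1 := by
  obtain hp | hp := mem_union.1 hp
  · obtain ⟨t, ht, rfl⟩ := (hs.mem_iff p).1 hp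
    exact ⟨t, ht, rfl⟩
  · obtain ⟨t, ht, h⟩ := mem_greedyUpTo.1 hp
    exact ⟨t, ht, (mem_greedyStep.1 h).1⟩

theorem mem_greedyG_iff (hs : IsAccessSeq n X s) : (x, (t : ℤ) + 1) ∈ greedyG n X ↔
    t < n ∧ x ≠ s t ∧ Exposed (greedyTouched n X) (Set.uIcc (s t) x) x t := by
  have hmem : ∀ p : Pt, t < n → p.2 < (t : ℤ) + 1 →
      (p ∈ X ∪ greedyUpTo X t ↔ p ∈ X ∪ greedyG n X) := fun p ht hp => by
    rw [mem_union, mem_union, mem_greedyUpTo_iff_mem_greedyG ht.le hp]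
  constructor
  · intro h
    obtain ⟨t', ht, h⟩ := mem_greedyUpTo.1 h
    obtain ⟨htt, y, hy, hne, u, hu, hq, h⟩ := mem_greedyStep.1 h
    obtain rfl : t = t' := by simpa using htt
    obtain ⟨-, rfl⟩ := hs.mk_mem_iff.1 hy
    rw [hmem _ ht hu] at hq
    obtain ⟨v, -, hvu⟩ := hs.exists_time hq
    obtain rfl : u = (v : ℤ) + 1 := hvu
    refine ⟨ht, hne, v, by omega, mem_greedyTouched.2 hq, fun w hvw hwt z hz hzw => ?_⟩
    have hwt' : (w : ℤ) + 1 < t + 1 := by omega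
    exact congrArg Prod.fst (h (z, (w : ℤ) + 1)
      ((hmem _ ht hwt').2 (mem_greedyTouched.1 hzw)) hwt'
      ((inRect_iff_mem_uIcc (by omega) hwt).2 ⟨hz, hvw⟩))
  · rintro ⟨ht, hne, hexp⟩
    obtain ⟨v, hv, hx, h⟩ := hexp.exists_last
    refine mem_greedyUpTo.2 ⟨t, ht, mem_greedyStep.2 ⟨rfl, s t, hs.mk_mem_iff.2 ⟨ht, rfl⟩, hne,
      (v : ℤ) + 1, by omega, (hmem _ ht (by simpa using hv)).2 (mem_greedyTouched.1 hx), ?_⟩⟩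
    rintro ⟨y, w⟩ hr hrt hin
    rw [hmem _ ht hrt] at hr
    obtain ⟨u, -, hw⟩ := hs.exists_time hr
    obtain rfl : w = (u : ℤ) + 1 := hw
    have hut : u < t := by simpa using hrt
    obtain ⟨hy, hvu⟩ := (inRect_iff_mem_uIcc hv hut).1 hin
    obtain ⟨rfl, rfl⟩ := h u hvu hut y hy (mem_greedyTouched.2 hr)
    rfl

theorem isGreedyRun (hs : IsAccessSeq n X s) : IsGreedyRun n s (greedyTouched n X) where
  mem_iff t x := by
    rw [mem_greedyTouched, mem_union, hs.mk_mem_iff, hs.mem_greedyG_iff]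
    tauto

theorem mem_keys_iff (hs : IsAccessSeq n X s) (hB : B ⊆ X) :
    s t ∈ keys B ↔ t < n ∧ (s t, (t : ℤ) + 1) ∈ B := by
  constructor
  · rintro ⟨p, hp, hpt⟩
    obtain ⟨u, hu, rfl⟩ := (hs.mem_iff p).1 (hB hp)
    obtain rfl := hs.injective hpt
    exact ⟨hu, hp⟩
  · exact fun h => ⟨_, h.2, rfl⟩

theorem exists_isTimeBlock (hs : IsAccessSeq n X s) (hB : IsBlock X B) :
    ∃ i e, IsTimeBlock s (keys B) i e := by
  obtain ⟨⟨p, hp⟩, ⟨i, j, hij⟩, -⟩ := id hB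
  have hBX : B ⊆ X := hij ▸ filter_subset _ _
  have hmem : ∀ t, s t ∈ keys B ↔ (i - 1).toNat ≤ t ∧ t < min n j.toNat := fun t => by
    rw [hs.mem_keys_iff hBX, hij, mem_filter, hs.mk_mem_iff]
    dsimp only
    omega
  obtain ⟨u, -, rfl⟩ := (hs.mem_iff p).1 (hBX hp)
  have hu := (hmem u).1 ⟨_, hp, rfl⟩
  exact ⟨_, _, hB.ordConnected_keys, hu.1.trans_lt hu.2, hmem⟩

theorem isTimeBlock_keys (hs : IsAccessSeq n X s) (hn : 0 < n) (hX : (keys X).OrdConnected) :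
    IsTimeBlock s (keys X) 0 n where
  ordConnected := hX
  lt := hn
  mem_iff t := by
    rw [hs.mem_keys_iff Subset.rfl, hs.mk_mem_iff]
    simp only [and_true, and_self, Nat.zero_le, true_and]

theorem card_union_greedyG_le (hs : IsAccessSeq n X s) (hR : IsTimeBlock s (keys X) 0 n) :
    #(X ∪ greedyG n X) ≤ 1 + blockPotential (greedyTouched n X) (keys X) 0 n := by
  have hsub : X ∪ greedyG n X ⊆ (Ico 0 n).biUnion fun t =>
      (greedyTouched n X t).image fun x => ((x, (t : ℤ) + 1) : Pt) := by
    rintro ⟨x, w⟩ hp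
    obtain ⟨t, ht, hw⟩ := hs.exists_time hp
    obtain rfl : w = (t : ℤ) + 1 := hw
    exact mem_biUnion.2 ⟨t, mem_Ico.2 ⟨t.zero_le, ht⟩,
      mem_image_of_mem _ (mem_greedyTouched.2 hp)⟩
  have hfirst : greedyTouched n X 0 ⊆ {s 0} := fun x hx => by
    obtain ⟨u, hu, rfl⟩ := hs.isGreedyRun.exists_access_le hx
    rw [Nat.le_zero.1 hu, mem_singleton]
  calc #(X ∪ greedyG n X)
      ≤ ∑ t ∈ Ico 0 n, #(greedyTouched n X t) :=
        (card_le_card hsub).trans (card_biUnion_le.trans (sum_le_sum fun _ _ => card_image_le))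
    _ = #(greedyTouched n X 0) + ∑ t ∈ Ioo 0 n, #(greedyTouched n X t) := by
        rw [← Ioo_insert_left hR.lt, sum_insert left_notMem_Ioo]
    _ ≤ 1 + blockPotential (greedyTouched n X) (keys X) 0 n :=
        add_le_add ((card_le_card hfirst).trans (card_singleton _).le) (Nat.le_add_right _ _)

end IsAccessSeq

theorem IsTimeBlock.unique {K : Type*} [LinearOrder K] {s : ℕ → K} {R : Set K} {i e i' e' : ℕ}
    (hR : IsTimeBlock s R i e) (hR' : IsTimeBlock s R i' e') : i = i' ∧ e = e' := by
  have hiff : ∀ t, i ≤ t ∧ t < e ↔ i' ≤ t ∧ t < e' := fun t =>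
    (hR.mem_iff t).symm.trans (hR'.mem_iff t)
  have := hR.lt
  have := hR'.lt
  have := hiff i
  have := hiff i'
  have := hiff (e - 1)
  have := hiff (e' - 1)
  omega

theorem IsTimeBlock.blockPotential_le_one {K : Type*} [LinearOrder K] {s : ℕ → K} {R : Set K}
    {i e : ℕ} (hR : IsTimeBlock s R i e) (hs : Function.Injective s) (hsub : R.Subsingleton)
    (T : ℕ → Finset K) : blockPotential T R i e ≤ 1 := by
  have hie : Ioo i e = ∅ := eq_empty_of_forall_notMem fun t ht => by
    rw [mem_Ioo] at ht
    exact ht.1.ne (hs (hsub ((hR.mem_iff i).2 ⟨le_rfl, hR.lt⟩) ((hR.mem_iff t).2 ⟨ht.1.le, ht.2⟩)))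
  rw [blockPotential, hie, sum_empty, zero_add]
  exact card_le_one.2 fun x hx y hy => hsub (mem_of_mem_visible hx) (mem_of_mem_visible hy)

/-! ### Decomposition trees -/

namespace DecompTree

variable {n : ℕ} {X B C C' : Finset Pt} {s : ℕ → ℤ} {p : Pt}

theorem mem_children {D : DecompTree X} :
    C ∈ D.children B ↔ C ∈ D.nodes ∧ C ≠ X ∧ D.parent C = B := by
  simp only [children, mem_filter]

theorem ssubset_of_mem_children {D : DecompTree X} (hC : C ∈ D.children B) : C ⊂ B := by
  obtain ⟨hnode, hne, rfl⟩ := mem_children.1 hC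
  exact D.ssubset_parent C hnode hne

theorem exists_mem_children (D : DecompTree X) (hB : B ∈ D.nodes) (hcard : #B ≠ 1) (hp : p ∈ B) :
    ∃ C ∈ D.children B, p ∈ C := by
  obtain ⟨C, ⟨hnode, hne, hparent, hpC⟩, -⟩ := D.children_partition B hB hcard p hp
  exact ⟨C, mem_children.2 ⟨hnode, hne, hparent⟩, hpC⟩

theorem eq_of_mem_children (D : DecompTree X) (hB : B ∈ D.nodes) (hcard : #B ≠ 1)
    (hC : C ∈ D.children B) (hC' : C' ∈ D.children B) (hp : p ∈ C) (hp' : p ∈ C') : C = C' := by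
  obtain ⟨hnode, hne, hparent⟩ := mem_children.1 hC
  obtain ⟨hnode', hne', hparent'⟩ := mem_children.1 hC'
  exact (D.children_partition B hB hcard p ((ssubset_of_mem_children hC).1 hp)).unique
    ⟨hnode, hne, hparent, hp⟩ ⟨hnode', hne', hparent', hp'⟩

theorem two_le_card_children (D : DecompTree X) (hB : B ∈ D.nodes) (hcard : #B ≠ 1) :
    2 ≤ #(D.children B) := by
  obtain ⟨p, hp⟩ := (D.isBlock_nodes B hB).1
  obtain ⟨C, hC, -⟩ := D.exists_mem_children hB hcard hp
  obtain ⟨q, hq, hqC⟩ := exists_of_ssubset (ssubset_of_mem_children hC)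
  obtain ⟨C', hC', hqC'⟩ := D.exists_mem_children hB hcard hq
  exact one_lt_card.2 ⟨C, hC, C', hC', fun h => hqC (h ▸ hqC')⟩

theorem sum_card_children_le (D : DecompTree X) (hB : B ∈ D.nodes) (hcard : #B ≠ 1) :
    ∑ C ∈ D.children B, #C ≤ #B := by
  rw [← card_biUnion (t := fun C => C) fun C hC C' hC' hne => disjoint_left.2 fun p hp hp' =>
    hne (D.eq_of_mem_children hB hcard hC hC' hp hp')]
  exact card_le_card (biUnion_subset.2 fun C hC => (ssubset_of_mem_children hC).1)

/- An internal node has at least two children, so the surplus `2 * a` on the left pays for them. -/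
theorem add_le_mul_card_of_recurrence (D : DecompTree X) {f : Finset Pt → ℕ} {a : ℕ}
    (hleaf : ∀ B ∈ D.nodes, #B = 1 → f B ≤ 1)
    (hnode : ∀ B ∈ D.nodes, #B ≠ 1 → f B ≤ ∑ C ∈ D.children B, f C + a * #(D.children B))
    (hB : B ∈ D.nodes) : f B + 2 * a ≤ (2 * a + 1) * #B := by
  induction B using Finset.strongInduction with
  | _ B ih =>
    by_cases hcard : #B = 1
    · rw [hcard]
      linarith [hleaf B hB hcard]
    · have hsum : ∑ C ∈ D.children B, f C + #(D.children B) * (2 * a) ≤ (2 * a + 1) * #B := by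
        rw [← smul_eq_mul, ← sum_const, ← sum_add_distrib]
        refine (sum_le_sum fun C hC => ih C (ssubset_of_mem_children hC)
          (mem_children.1 hC).1).trans ?_
        rw [← mul_sum]
        exact Nat.mul_le_mul_left _ (D.sum_card_children_le hB hcard)
      have htwo := Nat.mul_le_mul_left a (D.two_le_card_children hB hcard)
      linarith [hnode B hB hcard]

theorem keys_inter_preimage_eq (D : DecompTree X) (hs : IsAccessSeq n X s) (hB : B ∈ D.nodes)
    (hcard : #B ≠ 1) {col : ℤ → Finset Pt}
    (hcol : ∀ x ∈ keys B, col x ∈ D.children B ∧ x ∈ keys (col x)) (hC : C ∈ D.children B) :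
    keys B ∩ col ⁻¹' {C} = keys C := by
  have hsub : ∀ {C}, C ∈ D.children B → C ⊆ X := fun hC => by
    obtain ⟨i, j, hij⟩ := (D.isBlock_nodes _ (mem_children.1 hC).1).2.1
    exact hij ▸ filter_subset _ _
  refine Set.Subset.antisymm ?_ fun x hx => ?_
  · rintro x ⟨hx, rfl⟩
    exact (hcol x hx).2
  have hxB : x ∈ keys B := keys_mono (ssubset_of_mem_children hC).1 hx
  obtain ⟨hcolx, q, hq, hqx⟩ := hcol x hxB
  obtain ⟨p, hp, rfl⟩ := hx
  obtain rfl := hs.eq_of_fst_eq (hsub hcolx hq) (hsub hC hp) hqx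
  exact ⟨hxB, D.eq_of_mem_children hB hcard hcolx hC hq hp⟩

theorem exists_isBlockPartition (D : DecompTree X) (hs : IsAccessSeq n X s) {st en : Finset Pt → ℕ}
    (hblock : ∀ B ∈ D.nodes, IsTimeBlock s (keys B) (st B) (en B)) (hB : B ∈ D.nodes)
    (hcard : #B ≠ 1) :
    ∃ col : ℤ → Finset Pt, (∀ C ∈ D.children B, keys B ∩ col ⁻¹' {C} = keys C) ∧
      IsBlockPartition s (keys B) (st B) (en B) col (D.children B) st en := by
  have hcover : ∀ x ∈ keys B, ∃ C, C ∈ D.children B ∧ x ∈ keys C := by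
    rintro x ⟨p, hp, rfl⟩
    obtain ⟨C, hC, hpC⟩ := D.exists_mem_children hB hcard hp
    exact ⟨C, hC, p, hpC, rfl⟩
  choose! col hcol using hcover
  have hkeys : ∀ C ∈ D.children B, keys B ∩ col ⁻¹' {C} = keys C :=
    fun C hC => D.keys_inter_preimage_eq hs hB hcard hcol hC
  exact ⟨col, hkeys, hblock B hB, fun x hx => (hcol x hx).1,
    fun C hC => (hkeys C hC).symm ▸ hblock C (mem_children.1 hC).1⟩

theorem blockPotential_le (D : DecompTree X) (hs : IsAccessSeq n X s) {h : ℕ}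
    (hD : ∀ B ∈ D.nodes, #(D.children B) ≤ 2 ^ h) {i e : ℕ} (hX : IsTimeBlock s (keys X) i e) :
    blockPotential (greedyTouched n X) (keys X) i e + 2 * (5 + 20 * h) ≤
      (2 * (5 + 20 * h) + 1) * n := by
  choose! st en hblock using fun B hB => hs.exists_isTimeBlock (D.isBlock_nodes B hB)
  have hbound := D.add_le_mul_card_of_recurrence
    (f := fun B => blockPotential (greedyTouched n X) (keys B) (st B) (en B)) (a := 5 + 20 * h)
    (fun B hB hcard => ?_) (fun B hB hcard => ?_) D.root_mem
  · obtain ⟨rfl, rfl⟩ := hX.unique (hblock X D.root_mem)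
    exact hbound.trans (Nat.mul_le_mul_left _ hs.card_le)
  · obtain ⟨p, rfl⟩ := card_eq_one.1 hcard
    refine (hblock _ hB).blockPotential_le_one hs.injective ?_ _
    rw [keys, coe_singleton, Set.image_singleton]
    exact Set.subsingleton_singleton
  · obtain ⟨col, hkeys, hP⟩ := D.exists_isBlockPartition hs hblock hB hcard
    have hrec := hs.isGreedyRun.blockPotential_le_sum hP (hD B hB)
    rwa [sum_congr rfl fun C hC => by rw [hkeys C hC]] at hrec

end DecompTree

theorem card_union_greedyG_le {n k : ℕ} {X : Finset Pt} (hn : 1 ≤ n) (hX : IsPermPointSet n X)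
    (hk : kDecomposable k X) : #(X ∪ greedyG n X) ≤ (11 + 40 * Nat.clog 2 k) * n := by
  obtain ⟨s, hs⟩ := hX.exists_isAccessSeq
  obtain ⟨D, hD⟩ := hk
  have hR := hs.isTimeBlock_keys hn (D.isBlock_nodes X D.root_mem).ordConnected_keys
  have hpotential := D.blockPotential_le hs
    (fun B hB => (hD B hB).trans (Nat.le_pow_clog one_lt_two k)) hR
  linarith [hs.card_union_greedyG_le hR]

/-- There is an absolute constant `C > 0` such that for every `n ≥ 1`, every
integer `k ≥ 2` and every `k`-decomposable permutation point set `X` of size `n`, GREEDY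
satisfies `|X ∪ G| ≤ C · n · log₂ k`. -/
theorem greedy_on_decomposable_sequences :
    ∃ C : ℝ, 0 < C ∧ ∀ (n k : ℕ) (X : Finset Pt), 1 ≤ n → 2 ≤ k →
      IsPermPointSet n X → kDecomposable k X →
      (((X ∪ greedyG n X).card : ℝ)) ≤ C * n * Real.logb 2 k := by
  refine ⟨91, by norm_num, fun n k X hn hk hX hdec => ?_⟩
  have hlog : 1 ≤ Real.logb 2 k := by
    rw [Real.le_logb_iff_rpow_le one_lt_two (by positivity), Real.rpow_one]
    exact_mod_cast hk
  have hclog : (Nat.clog 2 k : ℝ) ≤ Real.logb 2 k + 1 := by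
    rw [← Real.natCeil_logb_natCast, Nat.cast_ofNat]
    exact (Nat.ceil_lt_add_one (zero_le_one.trans hlog)).le
  calc ((X ∪ greedyG n X).card : ℝ) ≤ (11 + 40 * Nat.clog 2 k) * n := by
        exact_mod_cast card_union_greedyG_le hn hX hdec
    _ ≤ (91 * Real.logb 2 k) * n := by gcongr; linarith
    _ = 91 * n * Real.logb 2 k := by ring
end

section
/- For every integer k ≥ 2 and every k-decomposable permutation point set X of size n, the set MMC of pairs arising from the execution of GREEDY satisfies |MMC| ≤ 14 · n · log₂ k. -/
open Finset

attribute [local instance] Classical.propDecidable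

/-! Every pair `(a, b)` of `MMC` is a *zig*: `a` touches some key `P` last touched by `b`, and the
key of `a` lies between those of `b` and `P`. Such a pair is charged at a node `D` of the
decomposition tree. If some child `C` of `D` contains `b` but not `a`, and `P` lies in another
child `E`, then GREEDY already touched `E` at the top of `C`, and the pair is charged to `(C, E)`.
Otherwise some child `A` of `D` contains `a` but not `b`, with `P` outside `D`; then `a` is the
top of `A`, the top of `D` is not in `A`, and the pair is charged to `A` together with the side of
`a` on which `P` lies. No charge is used twice.

The charges of the second kind number at most two per child `A`, and those children `A` have
distinct tops. For the charges of the first kind at a node with `q` children, contract each child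
to its top. GREEDY then touches the children as in an access sequence, a touched child having been
touched more recently than all children between it and the accessed one, and a sum-of-logs
potential bounds the number of touches by `O(q log q)`. The trivial bound `q (q - 1)` takes care
of small `q`. -/

section Amortization

variable {ι α : Type*}

lemma log_two_sub_add_log_two_lt {u w : ℕ} (hu : 0 < u) (huw : u < w) :
    Nat.log 2 (w - u) + Nat.log 2 u < 2 * Nat.log 2 w := by
  have log_double {v : ℕ} (hv : 0 < v) (hvw : v * 2 ≤ w) : Nat.log 2 v + 1 ≤ Nat.log 2 w := by
    rw [← Nat.log_mul_base one_lt_two hv.ne']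
    exact Nat.log_mono_right hvw
  have log_sub_le : Nat.log 2 (w - u) ≤ Nat.log 2 w := Nat.log_mono_right (Nat.sub_le w u)
  have log_le : Nat.log 2 u ≤ Nat.log 2 w := Nat.log_mono_right huw.le
  rcases le_total (u * 2) w with hle | hle
  · have := log_double hu hle
    omega
  · have := log_double (v := w - u) (by omega) (by omega)
    omega

lemma exists_list_pairwise_lt [LinearOrder α] {s : Finset ι} {f : ι → α}
    (hf : Set.InjOn f s) :
    ∃ l : List ι, l.Nodup ∧ l.toFinset = s ∧ l.Pairwise fun x y => f x < f y := by
  induction s using Finset.induction_on_max_value f with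
  | empty => exact ⟨[], by simp⟩
  | insert a s ha hmax ih =>
    obtain ⟨l, hnodup, rfl, hsorted⟩ := ih (hf.mono (by simp))
    simp only [List.mem_toFinset] at ha hmax
    refine ⟨l ++ [a], hnodup.append (List.nodup_singleton a) (by simpa), by ext; simp,
      List.pairwise_append.2 ⟨hsorted, List.pairwise_singleton _ a, ?_⟩⟩
    simp only [List.mem_singleton, forall_eq]
    refine fun x hx => (hmax x hx).lt_of_ne fun hxa => ?_
    exact ha (hf (by simp [hx]) (by simp) hxa ▸ hx)

-- Each interior gap pays for one unit, because `log (w - u) + 1 + log u ≤ 2 * log w`.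
lemma sum_map_add_length_le_sum_log {A d : ι → ℕ} {N : ℕ} {l : List ι} {x y : ι}
    (hsorted : (x :: y :: l).Pairwise fun i j => d i < d j) (hpos : 0 < d x)
    (hgap : ∀ i ∈ x :: y :: l, ∀ j ∈ x :: y :: l, ∀ m ∈ x :: y :: l, d i < d j → d j < d m →
      A j ≤ Nat.log 2 (d m - d i))
    (hA : ∀ i ∈ x :: y :: l, A i ≤ Nat.log 2 N) (hN : ∀ i ∈ x :: y :: l, d i ≤ N) :
    A y + (l.map A).sum + l.length + Nat.log 2 (d x) + Nat.log 2 (d y)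
      ≤ (l.map fun i => Nat.log 2 (d i)).sum + 3 * Nat.log 2 N := by
  induction l generalizing x y with
  | nil =>
    have hAy := hA y (by simp)
    have hx := Nat.log_mono_right (b := 2) (hN x (by simp))
    have hy := Nat.log_mono_right (b := 2) (hN y (by simp))
    simp only [List.map_nil, List.sum_nil, List.length_nil]
    omega
  | cons z l ih =>
    have hsorted' := hsorted.of_cons
    have hxy : d x < d y := (List.pairwise_cons.1 hsorted).1 y (by simp)
    have hyz : d y < d z := (List.pairwise_cons.1 hsorted').1 z (by simp)
    have tail := ih hsorted' (hpos.trans hxy)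
      (fun i hi j hj m hm => hgap i (.tail _ hi) j (.tail _ hj) m (.tail _ hm))
      (fun i hi => hA i (.tail _ hi)) (fun i hi => hN i (.tail _ hi))
    have gap := hgap x (by simp) y (by simp) z (by simp) hxy hyz
    have := log_two_sub_add_log_two_lt hpos (hxy.trans hyz)
    simp only [List.map_cons, List.sum_cons, List.length_cons]
    omega

lemma sum_add_card_le_sum_log {s : Finset ι} {A d : ι → ℕ} {N : ℕ}
    (hinj : Set.InjOn d s) (hpos : ∀ i ∈ s, 0 < d i)
    (hgap : ∀ i ∈ s, ∀ j ∈ s, ∀ m ∈ s, d i < d j → d j < d m → A j ≤ Nat.log 2 (d m - d i))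
    (hA : ∀ i ∈ s, A i ≤ Nat.log 2 N) (hN : ∀ i ∈ s, d i ≤ N) :
    ∑ i ∈ s, A i + s.card ≤ ∑ i ∈ s, Nat.log 2 (d i) + (4 * Nat.log 2 N + 2) := by
  obtain ⟨l, hnodup, rfl, hsorted⟩ := exists_list_pairwise_lt hinj
  rw [List.sum_toFinset A hnodup, List.sum_toFinset _ hnodup,
    List.toFinset_card_of_nodup hnodup]
  simp only [List.mem_toFinset] at hpos hgap hA hN
  match l with
  | [] => simp
  | [x] =>
    have := hA x (by simp)
    simp only [List.map_cons, List.map_nil, List.sum_cons, List.sum_nil, List.length_singleton]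
    omega
  | x :: y :: l =>
    have := sum_map_add_length_le_sum_log hsorted (hpos x (by simp)) hgap hA hN
    have := hA x (by simp)
    simp only [List.map_cons, List.sum_cons, List.length_cons]
    omega

lemma add_sum_cost_le_card_mul [LinearOrder α] {s : Finset ι} {f : ι → α} {Ψ : α → ℕ}
    {cost : ι → ℕ} {C : ℕ} {e : α} (hf : Set.InjOn f s)
    (hstart : ∀ u ≤ e, (∀ i ∈ s, u ≤ f i) → Ψ u = 0)
    (hstep : ∀ i ∈ s, ∀ u ≤ e, f i < u → (∀ j ∈ s, f j < u → f j ≤ f i) →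
      Ψ u + cost i ≤ Ψ (f i) + C)
    (he : ∀ i ∈ s, f i < e) :
    Ψ e + ∑ i ∈ s, cost i ≤ s.card * C := by
  induction s using Finset.induction_on_max_value f generalizing e with
  | empty => simp [hstart e le_rfl]
  | insert a s ha hmax ih =>
    have hae : f a < e := he a (mem_insert_self a s)
    have hlt : ∀ i ∈ s, f i < f a := fun i hi => (hmax i hi).lt_of_ne fun hia =>
      ha (hf (mem_insert_of_mem hi) (mem_insert_self a s) hia ▸ hi)
    have before := ih (e := f a) (hf.mono (coe_subset.2 (subset_insert a s)))
      (fun u hu hus => hstart u (hu.trans hae.le) (forall_mem_insert _ _ _ |>.2 ⟨hu, hus⟩))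
      (fun i hi u hu hiu hlast => hstep i (mem_insert_of_mem hi) u (hu.trans hae.le) hiu
        (forall_mem_insert _ _ _ |>.2 ⟨fun hau => absurd hau hu.not_gt, hlast⟩)) hlt
    have last := hstep a (mem_insert_self a s) e le_rfl hae
      (forall_mem_insert _ _ _ |>.2 ⟨fun _ => le_rfl, fun i hi _ => hmax i hi⟩)
    rw [sum_insert ha, card_insert_of_notMem ha, Nat.succ_mul]
    omega

end Amortization

section RankPotential

variable {ι α β : Type*} [LinearOrder α] [LinearOrder β]

/-- The items of `K` with key between those of `a` and `e`, the key of `a` excluded. -/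
noncomputable def keySegment (K : Finset ι) (κ : ι → α) (a e : ι) : Finset ι :=
  K.filter fun x => κ x ∈ Set.uIcc (κ a) (κ e) ∧ κ x ≠ κ a

lemma card_filter_uIoo_add_card_keySegment_lt {K : Finset ι} {κ : ι → α} {a x z : ι} (hz : z ∈ K)
    (hx : κ x ∈ Set.uIoo (κ a) (κ z)) :
    (K.filter fun w => κ w ∈ Set.uIoo (κ x) (κ z)).card + (keySegment K κ a x).card
      < (keySegment K κ a z).card := by
  rw [← card_union_of_disjoint (disjoint_left.2 fun w hw hw' => by
    grind [keySegment, Set.mem_uIcc, Set.uIoo])]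
  refine card_lt_card (ssubset_iff_of_subset (fun w hw => ?_) |>.2 ⟨z, ?_, ?_⟩) <;>
    grind [keySegment, Set.mem_uIcc, Set.uIoo]

variable [DecidableEq ι]

/-- The items of `K` reachable from `e` along the keys `κ` without crossing an item of `I` whose
timestamp `τ` is at least that of `e`. -/
noncomputable def nbhd (K I : Finset ι) (κ : ι → α) (τ : ι → β) (e : ι) : Finset ι :=
  K.filter fun x => ∀ f ∈ I, f ≠ e → κ f ∈ Set.uIcc (κ e) (κ x) → τ f < τ e

/-- The rank of `e`: the base-two logarithm of the size of its neighbourhood. -/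
noncomputable def itemRank (K I : Finset ι) (κ : ι → α) (τ : ι → β) (e : ι) : ℕ :=
  Nat.log 2 ((nbhd K I κ τ e).card + 1)

/-- The sum-of-logs potential of the active items `I` among all items `K`. -/
noncomputable def rankPotential (K I : Finset ι) (κ : ι → α) (τ : ι → β) : ℕ :=
  ∑ e ∈ I, itemRank K I κ τ e

/-- The effect on timestamps of accessing a new item `a` at time `t`: the items of `T` are
touched. A touched item had a later timestamp than all active items separating it from `a`;
`τ'` may date a touched item later than `t`, but only if no active item separates it
from `a`. -/
structure IsAccess (κ : ι → α) (I T : Finset ι) (a : ι) (t : β) (τ τ' : ι → β) : Prop where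
  notMem : a ∉ I
  subset : T ⊆ I
  lt : ∀ e ∈ I, τ e < t
  lt_of_between : ∀ e ∈ T, ∀ f ∈ I, κ f ∈ Set.uIoo (κ a) (κ e) → τ f < τ e
  le : ∀ e ∈ T, t ≤ τ' e
  eq_of_between : ∀ e ∈ T, ∀ f ∈ I, κ f ∈ Set.uIoo (κ a) (κ e) → τ' e = t
  eq_of_notMem : ∀ e ∈ I, e ∉ T → τ' e = τ e

variable {K I T : Finset ι} {κ : ι → α} {a : ι} {t : β} {τ τ' : ι → β}

lemma itemRank_le (K I : Finset ι) (κ : ι → α) (τ : ι → β) (e : ι) :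
    itemRank K I κ τ e ≤ Nat.log 2 (K.card + 1) :=
  Nat.log_mono_right (Nat.succ_le_succ (card_le_card (filter_subset _ _)))

lemma IsAccess.keySegment_subset_nbhd (h : IsAccess κ I T a t τ τ') {e : ι} (he : e ∈ T)
    (hκ : Set.InjOn κ I) : keySegment K κ a e ⊆ nbhd K I κ τ e := by
  refine monotone_filter_right K fun x _ hx f hf hfe hfx => h.lt_of_between e he f hf ?_
  have : κ f ≠ κ e := fun hκf => hfe (hκ hf (h.subset he) hκf)
  grind [Set.mem_uIcc, Set.uIoo]

lemma IsAccess.nbhd_subset_uIoo (h : IsAccess κ I T a t τ τ') {x y z : ι} (hx : x ∈ T)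
    (hy : y ∈ T) (hz : z ∈ T) (hxy : κ x ∈ Set.uIoo (κ a) (κ y))
    (hyz : κ y ∈ Set.uIoo (κ a) (κ z)) :
    nbhd K (insert a I) κ τ' y ⊆ K.filter fun w => κ w ∈ Set.uIoo (κ x) (κ z) := by
  refine monotone_filter_right K fun w _ hw => ?_
  have hyt := h.eq_of_between y hy x (h.subset hx) hxy
  have not_crossed : ∀ f ∈ T, f ≠ y → κ f ∉ Set.uIcc (κ y) (κ w) := fun f hf hfy hfw =>
    (h.le f hf).not_gt (hyt ▸ hw f (mem_insert_of_mem (h.subset hf)) hfy hfw)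
  have hxw := not_crossed x hx (by rintro rfl; exact Set.right_notMem_uIoo hxy)
  have hzw := not_crossed z hz (by rintro rfl; exact Set.right_notMem_uIoo hyz)
  grind [Set.mem_uIcc, Set.uIoo]

lemma IsAccess.sum_itemRank_add_card_le_of_side (h : IsAccess κ I T a t τ τ') {R : Finset ι}
    (hRT : R ⊆ T) (hIK : I ⊆ K) (hκ : Set.InjOn κ I)
    (hside : (R : Set ι).Pairwise fun e f =>
      κ e ∈ Set.uIoo (κ a) (κ f) ∨ κ f ∈ Set.uIoo (κ a) (κ e))
    (hne : ∀ e ∈ R, κ e ≠ κ a) :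
    ∑ e ∈ R, itemRank K (insert a I) κ τ' e + R.card
      ≤ ∑ e ∈ R, itemRank K I κ τ e + (4 * Nat.log 2 (K.card + 1) + 2) := by
  have mem_K {e : ι} (he : e ∈ R) : e ∈ K := hIK (h.subset (hRT he))
  have segment_lt {e f : ι} (hf : f ∈ R) (hef : κ e ∈ Set.uIoo (κ a) (κ f)) :
      (keySegment K κ a e).card < (keySegment K κ a f).card :=
    (Nat.le_add_left _ _).trans_lt (card_filter_uIoo_add_card_keySegment_lt (mem_K hf) hef)
  have between {e f : ι} (he : e ∈ R) (hf : f ∈ R)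
      (hlt : (keySegment K κ a e).card < (keySegment K κ a f).card) : κ e ∈ Set.uIoo (κ a) (κ f) :=
    (hside he hf (by rintro rfl; exact hlt.false)).resolve_right
      fun hfe => (segment_lt he hfe).not_gt hlt
  have inj : Set.InjOn (fun e => (keySegment K κ a e).card) R := fun e he f hf hef => by
    by_contra hne
    rcases hside he hf hne with hb | hb
    · exact (segment_lt hf hb).ne hef
    · exact (segment_lt he hb).ne' hef
  refine (sum_add_card_le_sum_log (N := K.card + 1) inj (fun e he => card_pos.2 ⟨e, ?_⟩)
    (fun x hx y hy z hz hxy hyz => Nat.log_mono_right ?_) (fun e _ => itemRank_le _ _ _ _ e)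
    (fun e _ => Nat.le_succ_of_le (card_filter_le _ _))).trans
      (Nat.add_le_add_right (sum_le_sum fun e he => Nat.log_mono_right ?_) _)
  · exact mem_filter.2 ⟨mem_K he, Set.right_mem_uIcc, hne e he⟩
  · have := card_le_card (h.nbhd_subset_uIoo (K := K) (hRT hx) (hRT hy) (hRT hz)
      (between hx hy hxy) (between hy hz hyz))
    have := card_filter_uIoo_add_card_keySegment_lt (mem_K hz) (between hx hz (hxy.trans hyz))
    omega
  · exact Nat.le_succ_of_le (card_le_card (h.keySegment_subset_nbhd (hRT he) hκ))

lemma IsAccess.itemRank_le_itemRank_of_notMem (h : IsAccess κ I T a t τ τ') {e : ι} (he : e ∈ I)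
    (heT : e ∉ T) : itemRank K (insert a I) κ τ' e ≤ itemRank K I κ τ e := by
  refine Nat.log_mono_right (Nat.succ_le_succ (card_le_card
    (monotone_filter_right K fun x _ hx f hf hfe hfx => ?_)))
  have hlt := hx f (mem_insert_of_mem hf) hfe hfx
  rw [h.eq_of_notMem e he heT] at hlt
  by_cases hfT : f ∈ T
  · exact absurd (hlt.trans (h.lt e he)) (h.le f hfT).not_gt
  · rwa [h.eq_of_notMem f hf hfT] at hlt

theorem IsAccess.rankPotential_add_card_le (h : IsAccess κ I T a t τ τ') (hIK : insert a I ⊆ K)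
    (hκ : Set.InjOn κ K) :
    rankPotential K (insert a I) κ τ' + T.card
      ≤ rankPotential K I κ τ + (9 * Nat.log 2 (K.card + 1) + 4) := by
  have hIK' := (subset_insert a I).trans hIK
  have hne : ∀ e ∈ T, κ e ≠ κ a := fun e he hea => h.notMem <|
    hκ (hIK' (h.subset he)) (hIK (mem_insert_self a I)) hea ▸ h.subset he
  have inj : Set.InjOn κ T := hκ.mono (h.subset.trans hIK')
  have side {R : Finset ι} (hRT : R ⊆ T)
      (hR : (∀ e ∈ R, κ e < κ a) ∨ (∀ e ∈ R, κ a ≤ κ e)) :=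
    h.sum_itemRank_add_card_le_of_side hRT hIK' (hκ.mono hIK')
      (fun e he f hf hef => by
        have hκef := inj.ne (hRT he) (hRT hf) hef
        have hea := hne e (hRT he)
        have hfa := hne f (hRT hf)
        grind [Set.uIoo])
      fun e he => hne e (hRT he)
  have hLT : T.filter (fun e => κ e < κ a) ⊆ T := filter_subset _ T
  have left := side hLT (.inl fun e he => (mem_filter.1 he).2)
  have right := side (sdiff_subset (t := T.filter fun e => κ e < κ a))
    (.inr fun e he => by simpa [(mem_sdiff.1 he).1] using he)
  have rest : ∑ e ∈ I \ T, itemRank K (insert a I) κ τ' e ≤ ∑ e ∈ I \ T, itemRank K I κ τ e :=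
    sum_le_sum fun e he =>
      h.itemRank_le_itemRank_of_notMem (mem_sdiff.1 he).1 (mem_sdiff.1 he).2
  have new := itemRank_le K (insert a I) κ τ' a
  rw [rankPotential, rankPotential, sum_insert h.notMem, ← sum_sdiff h.subset,
    ← sum_sdiff (f := itemRank K I κ τ) h.subset, ← sum_sdiff hLT,
    ← sum_sdiff (f := itemRank K I κ τ) hLT, ← card_sdiff_add_card_eq_card hLT]
  omega

end RankPotential

section Greedy

variable {n : ℕ} {X S G : Finset Pt}

/-- From the key of `a`, at its time, the point `(x, s)` of `S` is visible: it is the only point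
of `S` in the rectangle spanned by `a` and `(x, s)` at times before `a`. -/
structure Sees (S : Finset Pt) (a : Pt) (x s : ℤ) : Prop where
  ne : x ≠ a.1
  lt : s < a.2
  mem : (x, s) ∈ S
  eq_of_mem : ∀ y u, (y, u) ∈ S → s ≤ u → u < a.2 → y ∈ Set.uIcc a.1 x → y = x ∧ u = s

lemma Sees.congr {S' : Finset Pt} {a : Pt} {x s : ℤ}
    (hS : ∀ r : Pt, r.2 < a.2 → (r ∈ S ↔ r ∈ S')) (h : Sees S a x s) : Sees S' a x s where
  ne := h.ne
  lt := h.lt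
  mem := (hS _ h.lt).1 h.mem
  eq_of_mem y u hy hsu hu := h.eq_of_mem y u ((hS (y, u) hu).2 hy) hsu hu

/-- `S` is the set of all points, accessed or added, of an execution of GREEDY on accesses `X`
with distinct keys and distinct times. -/
structure GreedyExecution (X S : Finset Pt) : Prop where
  key_injOn : Set.InjOn Prod.fst (X : Set Pt)
  time_injOn : Set.InjOn Prod.snd (X : Set Pt)
  exists_access : ∀ r ∈ S, ∃ a ∈ X, a.2 = r.2
  touch_iff : ∀ a ∈ X, ∀ x, (x, a.2) ∈ S ↔ x = a.1 ∨ ∃ s, Sees S a x s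

lemma IsPermPointSet.key_injOn (hX : IsPermPointSet n X) : Set.InjOn Prod.fst (X : Set Pt) := by
  obtain ⟨σ, rfl⟩ := hX
  simp [Set.InjOn, Fin.val_inj]

lemma IsPermPointSet.time_injOn (hX : IsPermPointSet n X) : Set.InjOn Prod.snd (X : Set Pt) := by
  obtain ⟨σ, rfl⟩ := hX
  simp [Set.InjOn, Fin.val_inj]

lemma IsPermPointSet.time_mem_Icc (hX : IsPermPointSet n X) {a : Pt} (ha : a ∈ X) :
    a.2 ∈ Set.Icc (1 : ℤ) n := by
  obtain ⟨σ, rfl⟩ := hX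
  obtain ⟨t, -, rfl⟩ := mem_image.1 ha
  simp only [Set.mem_Icc]
  omega

lemma IsPermPointSet.card_eq (hX : IsPermPointSet n X) : X.card = n := by
  obtain ⟨σ, rfl⟩ := hX
  rw [card_image_of_injective _ fun s t hst => by simpa [Fin.val_inj] using hst, card_univ,
    Fintype.card_fin]

lemma time_of_mem_greedyStep {t : ℤ} {r : Pt} (h : r ∈ greedyStep X G t) :
    r.2 = t ∧ ∃ a ∈ X, a.2 = t := by
  simp only [greedyStep, mem_biUnion, mem_image, mem_filter] at h
  obtain ⟨a, ⟨ha, hat⟩, q, _, rfl⟩ := h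
  exact ⟨rfl, a, ha, hat⟩

lemma time_of_mem_greedyUpTo {m : ℕ} {r : Pt} (h : r ∈ greedyUpTo X m) :
    r.2 ≤ m ∧ ∃ a ∈ X, a.2 = r.2 := by
  induction m with
  | zero => exact absurd h (notMem_empty r)
  | succ m ih =>
    rcases mem_union.1 h with hr | hr
    · exact ⟨(ih hr).1.trans (by simp), (ih hr).2⟩
    · obtain ⟨hrt, hX⟩ := time_of_mem_greedyStep hr
      exact ⟨by simp [hrt], hrt ▸ hX⟩

lemma mem_greedyUpTo_iff_of_le {m : ℕ} (hmn : m ≤ n) {r : Pt} (hr : r.2 ≤ m) :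
    r ∈ greedyUpTo X n ↔ r ∈ greedyUpTo X m := by
  induction n, hmn using Nat.le_induction with
  | base => rfl
  | succ n hn ih =>
    rw [greedyUpTo, mem_union, ih]
    refine ⟨fun h => h.resolve_right fun h' => ?_, .inl⟩
    have := (time_of_mem_greedyStep h').1
    omega

lemma mem_greedyUpTo_iff_mem_greedyStep {m : ℕ} (hmn : m + 1 ≤ n) {r : Pt} (hr : r.2 = m + 1) :
    r ∈ greedyUpTo X n ↔ r ∈ greedyStep X (greedyUpTo X m) (m + 1) := by
  rw [mem_greedyUpTo_iff_of_le hmn (by simp [hr]), greedyUpTo, mem_union]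
  refine ⟨fun h => h.resolve_left fun h' => ?_, .inr⟩
  have := (time_of_mem_greedyUpTo h').1
  omega

lemma mem_greedyStep_iff_exists_sees (hX : Set.InjOn Prod.snd (X : Set Pt)) {a : Pt}
    (ha : a ∈ X) {x : ℤ} :
    (x, a.2) ∈ greedyStep X G a.2 ↔ ∃ s, Sees (X ∪ G) a x s := by
  simp only [greedyStep, mem_biUnion, mem_image, mem_filter, inRect, Prod.mk.injEq, and_true]
  constructor
  · rintro ⟨b, ⟨hb, hba⟩, q, ⟨⟨hq, hqt⟩, hne, hvis⟩, rfl⟩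
    obtain rfl := hX hb ha hba
    refine ⟨q.2, hne, hqt, hq, fun y u hyu hsu hu hy => Prod.ext_iff.1 (hvis (y, u) ⟨hyu, hu⟩ ?_)⟩
    simp only [Set.mem_uIcc] at hy ⊢
    omega
  · rintro ⟨s, hsees⟩
    refine ⟨a, ⟨ha, rfl⟩, (x, s), ⟨⟨hsees.mem, hsees.lt⟩, hsees.ne, ?_⟩, rfl⟩
    rintro ⟨y, u⟩ ⟨hyu, hu⟩ hrect
    refine Prod.ext_iff.2 (hsees.eq_of_mem y u hyu ?_ hu (Set.mem_uIcc.2 ?_)) <;>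
      simp only at hrect hu <;> omega

theorem greedyExecution_union_greedyG (hkey : Set.InjOn Prod.fst (X : Set Pt))
    (htime : Set.InjOn Prod.snd (X : Set Pt)) (hn : ∀ a ∈ X, a.2 ∈ Set.Icc (1 : ℤ) n) :
    GreedyExecution X (X ∪ greedyG n X) where
  key_injOn := hkey
  time_injOn := htime
  exists_access r hr := (mem_union.1 hr).elim (fun h => ⟨r, h, rfl⟩) fun h =>
    (time_of_mem_greedyUpTo h).2
  touch_iff a ha x := by
    obtain ⟨ha₁, han⟩ := hn a ha
    obtain ⟨m, hm⟩ : ∃ m : ℕ, a.2 = m + 1 := ⟨(a.2 - 1).toNat, by omega⟩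
    have before (r : Pt) (hr : r.2 < a.2) : r ∈ X ∪ greedyG n X ↔ r ∈ X ∪ greedyUpTo X m := by
      rw [mem_union, mem_union, greedyG, mem_greedyUpTo_iff_of_le (m := m) (by omega) (by omega)]
    have mem_X : (x, a.2) ∈ X ↔ x = a.1 :=
      ⟨fun hx => congrArg Prod.fst (htime hx ha rfl), fun hx => hx ▸ ha⟩
    have mem_G : (x, a.2) ∈ greedyG n X ↔ ∃ s, Sees (X ∪ greedyUpTo X m) a x s := by
      rw [greedyG, mem_greedyUpTo_iff_mem_greedyStep (r := (x, a.2)) (by omega) hm, ← hm,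
        mem_greedyStep_iff_exists_sees htime ha]
    rw [mem_union, mem_X, mem_G]
    exact or_congr_right (exists_congr fun s =>
      ⟨.congr fun r hr => (before r hr).symm, .congr before⟩)

end Greedy

namespace GreedyExecution

variable {X S : Finset Pt} {a q : Pt}

lemma subset (h : GreedyExecution X S) : X ⊆ S :=
  fun a ha => (h.touch_iff a ha a.1).2 (.inl rfl)

lemma exists_access_key (h : GreedyExecution X S) {x t : ℤ} (hxt : (x, t) ∈ S) :
    ∃ q ∈ X, q.1 = x ∧ q.2 ≤ t := by
  obtain ⟨r, hr, hmin⟩ := exists_min_image (S.filter fun r => r.1 = x) Prod.snd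
    ⟨(x, t), by simp [hxt]⟩
  obtain ⟨hrS, rfl⟩ := mem_filter.1 hr
  obtain ⟨a, ha, har⟩ := h.exists_access r hrS
  rcases (h.touch_iff a ha r.1).1 (har ▸ hrS) with hra | ⟨s, hsees⟩
  · exact ⟨a, ha, hra.symm, har ▸ hmin (r.1, t) (by simp [hxt])⟩
  · exact absurd (hmin (r.1, s) (by simp [hsees.mem])) (har ▸ hsees.lt).not_ge

lemma time_le_of_touch (h : GreedyExecution X S) (ha : a ∈ X) {t : ℤ} (hat : (a.1, t) ∈ S) :
    a.2 ≤ t := by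
  obtain ⟨b, hb, hba, hbt⟩ := h.exists_access_key hat
  exact h.key_injOn hb ha hba ▸ hbt

lemma touch_of_nearest (h : GreedyExecution X S) (ha : a ∈ X) (hq : q ∈ X) (hqa : q.2 < a.2)
    (hnearest : ∀ r ∈ X, r.2 < a.2 → r.1 ∉ Set.uIoo a.1 q.1) : (q.1, a.2) ∈ S := by
  have ne_of_lt {r : Pt} (hr : r ∈ X) (hra : r.2 < a.2) : r.1 ≠ a.1 := fun hkey =>
    hra.ne (congrArg Prod.snd (h.key_injOn hr ha hkey))
  obtain ⟨r, hr, hmax⟩ := exists_max_image (S.filter fun r => r.1 = q.1 ∧ r.2 < a.2) Prod.snd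
    ⟨q, mem_filter.2 ⟨h.subset hq, rfl, hqa⟩⟩
  obtain ⟨hrS, hrq, hra⟩ := mem_filter.1 hr
  refine (h.touch_iff a ha q.1).2 (.inr ⟨r.2, ne_of_lt hq hqa, hra, hrq ▸ hrS, ?_⟩)
  intro y u hyu hru hua hy
  obtain ⟨c, hc, rfl, hcu⟩ := h.exists_access_key hyu
  have hca := ne_of_lt hc (hcu.trans_lt hua)
  have hcq : c.1 = q.1 := by
    have := hnearest c hc (hcu.trans_lt hua)
    grind [Set.mem_uIcc, Set.uIoo]
  exact ⟨hcq, (hmax (c.1, u) (mem_filter.2 ⟨hyu, hcq, hua⟩)).antisymm hru⟩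

lemma exists_touch_mem_uIoo (h : GreedyExecution X S) (ha : a ∈ X) {x : ℤ} (hq : q ∈ X)
    (hqa : q.2 < a.2) (hqx : q.1 ∈ Set.uIoo a.1 x) :
    ∃ r ∈ X, r.2 < a.2 ∧ r.1 ∈ Set.uIoo a.1 x ∧ (r.1, a.2) ∈ S := by
  obtain ⟨r, hr, hmin⟩ := exists_min_image
    (X.filter fun r => r.2 < a.2 ∧ r.1 ∈ Set.uIoo a.1 x) (fun r => (r.1 - a.1).natAbs)
    ⟨q, mem_filter.2 ⟨hq, hqa, hqx⟩⟩
  obtain ⟨hrX, hra, hrx⟩ := mem_filter.1 hr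
  refine ⟨r, hrX, hra, hrx, h.touch_of_nearest ha hrX hra fun c hc hca hcr => ?_⟩
  simp only [Set.uIoo, Set.mem_Ioo] at hrx hcr hmin
  have := hmin c (mem_filter.2 ⟨hc, hca, by omega⟩)
  omega

end GreedyExecution

section Points

variable {X S B : Finset Pt}

lemma headI_toList_mem {α : Type*} [Inhabited α] {s : Finset α} (hs : s.Nonempty) :
    s.toList.headI ∈ s := by
  rw [← mem_toList]
  cases hl : s.toList with
  | nil => exact absurd (toList_eq_nil.1 hl) hs.ne_empty
  | cons a l => simp

lemma OP_mem_and_time_eq {r : Pt} (h : ∃ a ∈ X, a.2 = r.2) : OP X r ∈ X ∧ (OP X r).2 = r.2 := by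
  obtain ⟨a, ha, har⟩ := h
  exact mem_filter.1 (headI_toList_mem ⟨a, mem_filter.2 ⟨ha, har⟩⟩)

lemma top_mem_and_le (hB : B.Nonempty) : TopPt B ∈ B ∧ ∀ q ∈ B, (TopPt B).2 ≤ q.2 := by
  obtain ⟨a, ha, hmin⟩ := exists_min_image B Prod.snd hB
  exact mem_filter.1 (headI_toList_mem ⟨a, mem_filter.2 ⟨ha, hmin⟩⟩)

lemma firstAbove_eq {p : Pt} {s : ℤ} (hs : (p.1, s) ∈ S) (hsp : s < p.2)
    (hmax : ∀ u, (p.1, u) ∈ S → u < p.2 → u ≤ s) : firstAbove S p = (p.1, s) := by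
  have max_eq : ((S.filter fun q => q.1 = p.1 ∧ q.2 < p.2).image Prod.snd).max = (s : ℤ) := by
    refine le_antisymm (Finset.max_le fun u hu => ?_)
      (le_max (mem_image.2 ⟨(p.1, s), mem_filter.2 ⟨hs, rfl, hsp⟩, rfl⟩))
    obtain ⟨q, hq, rfl⟩ := mem_image.1 hu
    obtain ⟨hqS, hqp, hlt⟩ := mem_filter.1 hq
    exact WithBot.coe_le_coe.2 (hmax q.2 (hqp ▸ hqS) hlt)
  rw [firstAbove, max_eq, WithBot.unbotD_coe]

end Points

namespace IsBlock

variable {X S C E F : Finset Pt} {a b c c' e e' f f' q r P : Pt}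

lemma subset (hC : IsBlock X C) : C ⊆ X := by
  obtain ⟨-, ⟨i, j, rfl⟩, -⟩ := hC
  exact filter_subset _ _

lemma top_mem (hC : IsBlock X C) : TopPt C ∈ C := (top_mem_and_le hC.1).1

lemma top_le (hC : IsBlock X C) (hc : c ∈ C) : (TopPt C).2 ≤ c.2 := (top_mem_and_le hC.1).2 c hc

lemma notMem_of_lt_top (hC : IsBlock X C) (hr : r.2 < (TopPt C).2) : r ∉ C :=
  fun hrC => (hC.top_le hrC).not_gt hr

lemma mem_of_time (hC : IsBlock X C) (ha : a ∈ C) (hc : c ∈ C) (hb : b ∈ X) (hab : a.2 ≤ b.2)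
    (hbc : b.2 ≤ c.2) : b ∈ C := by
  obtain ⟨-, ⟨i, j, rfl⟩, -⟩ := hC
  simp only [mem_filter] at ha hc ⊢
  exact ⟨hb, ha.2.1.trans hab, hbc.trans hc.2.2⟩

lemma mem_of_key (hC : IsBlock X C) (hX : Set.InjOn Prod.fst (X : Set Pt)) (ha : a ∈ C)
    (hc : c ∈ C) (hb : b ∈ X) (hbtw : b.1 ∈ Set.uIcc a.1 c.1) : b ∈ C := by
  obtain ⟨-, -, l, m, hlm⟩ := id hC
  have hkeys : ((C.image Prod.fst : Finset ℤ) : Set ℤ) = Set.Icc l m := by rw [hlm, coe_Icc]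
  have key_mem {x : Pt} (hx : x ∈ C) : x.1 ∈ Set.Icc l m :=
    hkeys ▸ mem_coe.2 (mem_image_of_mem Prod.fst hx)
  have hbkey := Set.ordConnected_Icc.uIcc_subset (key_mem ha) (key_mem hc) hbtw
  rw [← hkeys, mem_coe] at hbkey
  obtain ⟨b', hb', hkey⟩ := mem_image.1 hbkey
  exact hX (hC.subset hb') hb hkey ▸ hb'

lemma mem_uIoo_of_notMem (hC : IsBlock X C) (hX : Set.InjOn Prod.fst (X : Set Pt)) (hc : c ∈ C)
    (hc' : c' ∈ C) (hr : r ∈ X) (hrC : r ∉ C) {p : ℤ} (hrp : r.1 ∈ Set.uIoo c.1 p) :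
    r.1 ∈ Set.uIoo c'.1 p := by
  by_contra hcon
  refine hrC (hC.mem_of_key hX hc hc' hr ?_)
  simp only [Set.mem_uIcc, Set.uIoo, Set.mem_Ioo] at *
  omega

lemma mem_uIoo_of_disjoint (hC : IsBlock X C) (hE : IsBlock X E) (hF : IsBlock X F)
    (hX : Set.InjOn Prod.fst (X : Set Pt)) (hCF : Disjoint C F) (hEF : Disjoint E F) (hc : c ∈ C)
    (hc' : c' ∈ C) (he : e ∈ E) (he' : e' ∈ E) (hf : f ∈ F) (hf' : f' ∈ F)
    (hbtw : f.1 ∈ Set.uIoo c.1 e.1) :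
    f'.1 ∈ Set.uIoo c'.1 e'.1 := by
  have hfX := hF.subset hf
  have hfc' := hC.mem_uIoo_of_notMem hX hc hc' hfX (disjoint_right.1 hCF hf) hbtw
  rw [Set.uIoo_comm] at hfc'
  have hfe' := hE.mem_uIoo_of_notMem hX he he' hfX (disjoint_right.1 hEF hf) hfc'
  by_contra hcon
  have hcF : c'.1 ∉ Set.uIcc f.1 f'.1 := fun hmem =>
    disjoint_left.1 hCF hc' (hF.mem_of_key hX hf hf' (hC.subset hc') hmem)
  have heF : e'.1 ∉ Set.uIcc f.1 f'.1 := fun hmem =>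
    disjoint_left.1 hEF he' (hF.mem_of_key hX hf hf' (hE.subset he') hmem)
  simp only [Set.mem_uIcc, Set.uIoo, Set.mem_Ioo] at *
  omega

lemma time_lt_top_of_notMem (hC : IsBlock X C) (hc : c ∈ C) (hr : r ∈ X) (hrC : r ∉ C)
    (hrc : r.2 ≤ c.2) : r.2 < (TopPt C).2 :=
  not_le.1 fun hle => hrC (hC.mem_of_time hC.top_mem hc hr hle hrc)

lemma top_lt_of_ne (hC : IsBlock X C) (hX : Set.InjOn Prod.snd (X : Set Pt)) (hc : c ∈ C)
    (hne : c ≠ TopPt C) : (TopPt C).2 < c.2 :=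
  (hC.top_le hc).lt_of_ne fun heq => hne (hX (hC.subset hc) (hC.subset hC.top_mem) heq.symm)

lemma notMem_uIoo_of_touch (hC : IsBlock X C) (h : GreedyExecution X S) (hP : P ∈ X)
    (hPC : P ∉ C) (hb : b ∈ C) (hne : b ≠ TopPt C) (hPb : (P.1, b.2) ∈ S) (hq : q ∈ X)
    (hqC : q.2 < (TopPt C).2) : q.1 ∉ Set.uIoo b.1 P.1 := by
  intro hqb
  have htopX := hC.subset hC.top_mem
  have move {c c' r : Pt} (hc : c ∈ C) (hc' : c' ∈ C) (hr : r ∈ X) (hrC : r.2 < (TopPt C).2) :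
      r.1 ∈ Set.uIoo c.1 P.1 → r.1 ∈ Set.uIoo c'.1 P.1 :=
    hC.mem_uIoo_of_notMem h.key_injOn hc hc' hr (hC.notMem_of_lt_top hrC)
  obtain ⟨r, hr, hrC, hrP, htouch⟩ :=
    h.exists_touch_mem_uIoo htopX hq hqC (move hb hC.top_mem hq hqC hqb)
  -- A first non-topmost access of `C` touching `P` cannot see past `r`.
  obtain ⟨c, hc, hmin⟩ := exists_min_image
    (C.filter fun c => c ≠ TopPt C ∧ (P.1, c.2) ∈ S) Prod.snd ⟨b, mem_filter.2 ⟨hb, hne, hPb⟩⟩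
  obtain ⟨hcC, hctop, hPc⟩ := mem_filter.1 hc
  have hrc := move hC.top_mem hcC hr hrC hrP
  have htc := hC.top_lt_of_ne h.time_injOn hcC hctop
  obtain hPkey | ⟨s, hsees⟩ := (h.touch_iff c (hC.subset hcC) P.1).1 hPc
  · exact hPC (h.key_injOn hP (hC.subset hcC) hPkey ▸ hcC)
  have hts : (TopPt C).2 < s := by
    by_contra! hle
    have := (hsees.eq_of_mem r.1 _ htouch hle htc (Set.uIoo_subset_uIcc_self hrc)).1
    exact Set.right_notMem_uIoo (this ▸ hrP)
  obtain ⟨c', hc', rfl⟩ := h.exists_access _ hsees.mem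
  have hc'C := hC.mem_of_time hC.top_mem hcC hc' hts.le hsees.lt.le
  exact (hmin c' (mem_filter.2 ⟨hc'C, by rintro rfl; exact hts.false, hsees.mem⟩)).not_gt hsees.lt

lemma touch_top (hC : IsBlock X C) (h : GreedyExecution X S) (hP : P ∈ X) (hPC : P ∉ C)
    (hb : b ∈ C) (hPb : (P.1, b.2) ∈ S) : (P.1, (TopPt C).2) ∈ S := by
  rcases eq_or_ne b (TopPt C) with rfl | hne
  · exact hPb
  refine h.touch_of_nearest (hC.subset hC.top_mem) hP
    (hC.time_lt_top_of_notMem hb hP hPC (h.time_le_of_touch hP hPb)) fun r hr hrC hrP => ?_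
  exact hC.notMem_uIoo_of_touch h hP hPC hb hne hPb hr hrC
    (hC.mem_uIoo_of_notMem h.key_injOn hC.top_mem hb hr (hC.notMem_of_lt_top hrC) hrP)

end IsBlock

/-- The accesses `b` and `a` touch the key of `P` consecutively, and the key of `a` lies strictly
between those of `b` and `P`: the pairs `(a, b)` of `MMC` are of this form. -/
structure IsZig (X S : Finset Pt) (a b P : Pt) : Prop where
  left_mem : a ∈ X
  right_mem : b ∈ X
  key_mem : P ∈ X
  sees : Sees S a P.1 b.2
  btw : a.1 ∈ Set.uIoo b.1 P.1

lemma exists_isZig_CP {X G : Finset Pt} (h : GreedyExecution X (X ∪ G)) {r : Pt} (hr : r ∈ G)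
    (hm : inMMC X G r) : ∃ P, IsZig X (X ∪ G) (CP X G r).1 (CP X G r).2 P := by
  have hrS : r ∈ X ∪ G := mem_union_right X hr
  obtain ⟨ha, har⟩ := OP_mem_and_time_eq (h.exists_access r hrS)
  simp only [inMMC, CP] at hm ⊢
  obtain hkey | ⟨s, hsees⟩ := (h.touch_iff _ ha r.1).1 (har ▸ hrS)
  · omega
  have hfirst : firstAbove (X ∪ G) r = (r.1, s) := firstAbove_eq hsees.mem (har ▸ hsees.lt)
    fun u hu hur => not_lt.1 fun hsu =>
      hsu.ne' (hsees.eq_of_mem r.1 u hu hsu.le (har ▸ hur) Set.right_mem_uIcc).2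
  rw [hfirst] at hm ⊢
  obtain ⟨hb, hbs⟩ := OP_mem_and_time_eq (h.exists_access _ hsees.mem)
  obtain ⟨P, hP, hPr, -⟩ := h.exists_access_key hrS
  refine ⟨P, ha, hb, hP, by rwa [hPr, hbs], ?_⟩
  simp only [hPr, Set.uIoo, Set.mem_Ioo]
  omega

namespace IsZig

variable {X S A C D E : Finset Pt} {a b P a₁ a₂ b₁ b₂ P₁ P₂ : Pt}

lemma lt (hz : IsZig X S a b P) : b.2 < a.2 := hz.sees.lt

lemma touch_left (hz : IsZig X S a b P) (h : GreedyExecution X S) : (P.1, a.2) ∈ S :=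
  (h.touch_iff a hz.left_mem P.1).2 (.inr ⟨b.2, hz.sees⟩)

lemma time_le (hz : IsZig X S a b P) (h : GreedyExecution X S) : P.2 ≤ b.2 :=
  h.time_le_of_touch hz.key_mem hz.sees.mem

lemma left_notMem (hz : IsZig X S a b P) (h : GreedyExecution X S) (hE : IsBlock X E)
    (hP : P ∈ E) (hb : b ∉ E) : a ∉ E :=
  fun ha => hb (hE.mem_of_time hP ha hz.right_mem (hz.time_le h) hz.lt.le)

lemma not_lt_of_right_eq (hz₁ : IsZig X S a₁ b P) (hz₂ : IsZig X S a₂ b P)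
    (h : GreedyExecution X S) : ¬ a₁.2 < a₂.2 := fun hlt =>
  hz₁.lt.ne' (hz₂.sees.eq_of_mem P.1 a₁.2 (hz₁.touch_left h) hz₁.lt.le hlt Set.right_mem_uIcc).2

lemma left_eq_of_right_eq (hz₁ : IsZig X S a₁ b P) (hz₂ : IsZig X S a₂ b P)
    (h : GreedyExecution X S) : a₁ = a₂ :=
  h.time_injOn hz₁.left_mem hz₂.left_mem <|
    le_antisymm (not_lt.1 (hz₂.not_lt_of_right_eq hz₁ h)) (not_lt.1 (hz₁.not_lt_of_right_eq hz₂ h))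

lemma notMem_uIcc_of_crossing (hz : IsZig X S a b P) (h : GreedyExecution X S)
    (hE : IsBlock X E) (hP : P ∈ E) (hb : b ∉ E) {Q : Pt} (hQ : Q ∈ E) :
    a.1 ∉ Set.uIcc P.1 Q.1 :=
  fun ha => hz.left_notMem h hE hP hb (hE.mem_of_key h.key_injOn hP hQ hz.left_mem ha)

lemma not_lt_of_crossing (hz₁ : IsZig X S a₁ b₁ P₁) (hz₂ : IsZig X S a₂ b₂ P₂)
    (h : GreedyExecution X S) (hC : IsBlock X C) (hE : IsBlock X E) (hCE : Disjoint C E)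
    (hb₁ : b₁ ∈ C) (hb₂ : b₂ ∈ C) (ha₁ : a₁ ∉ C) (hP₁ : P₁ ∈ E) (hP₂ : P₂ ∈ E) :
    ¬ b₁.2 < b₂.2 := by
  intro hlt
  have hb₁E := disjoint_left.1 hCE hb₁
  have hP₁C := disjoint_right.1 hCE hP₁
  have hP₁top := hC.time_lt_top_of_notMem hb₁ hz₁.key_mem hP₁C (hz₁.time_le h)
  have hb₂top : b₂ ≠ TopPt C := by
    rintro rfl
    exact (hC.top_le hb₁).not_gt hlt
  have hP₁b₂ := hC.notMem_uIoo_of_touch h hz₂.key_mem (disjoint_right.1 hCE hP₂) hb₂ hb₂top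
    hz₂.sees.mem hz₁.key_mem hP₁top
  have hb₂a₁ : b₂.2 < a₁.2 := not_le.1 fun hle =>
    ha₁ (hC.mem_of_time hb₁ hb₂ hz₁.left_mem hz₁.lt.le hle)
  have hP₁b : P₁.1 ∉ Set.uIcc b₁.1 b₂.1 := fun hP =>
    hP₁C (hC.mem_of_key h.key_injOn hb₁ hb₂ hz₁.key_mem hP)
  have hb₂P : b₂.1 ∉ Set.uIcc P₁.1 P₂.1 := fun hb =>
    disjoint_left.1 hCE hb₂ (hE.mem_of_key h.key_injOn hP₁ hP₂ hz₂.right_mem hb)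
  have ha₁P := hz₁.notMem_uIcc_of_crossing h hE hP₁ hb₁E hP₂
  have hbtw := hz₁.btw
  have visible : P₂.1 ∈ Set.uIcc a₁.1 P₁.1 := by
    simp only [Set.mem_uIcc, Set.uIoo, Set.mem_Ioo] at *
    omega
  exact hlt.ne' (hz₁.sees.eq_of_mem P₂.1 b₂.2 hz₂.sees.mem hlt.le hb₂a₁ visible).2

lemma key_eq_of_crossing (hz₁ : IsZig X S a₁ b P₁) (hz₂ : IsZig X S a₂ b P₂)
    (h : GreedyExecution X S) (hE : IsBlock X E) (hb : b ∉ E) (hP₁ : P₁ ∈ E) (hP₂ : P₂ ∈ E) :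
    P₁ = P₂ := by
  refine h.key_injOn hz₁.key_mem hz₂.key_mem ?_
  have hb₁ : b.1 ∉ Set.uIcc P₁.1 P₂.1 := fun hbP =>
    hb (hE.mem_of_key h.key_injOn hP₁ hP₂ hz₁.right_mem hbP)
  have ha₁P := hz₁.notMem_uIcc_of_crossing h hE hP₁ hb hP₂
  have ha₂P := hz₂.notMem_uIcc_of_crossing h hE hP₂ hb hP₁
  have hbtw₁ := hz₁.btw
  have hbtw₂ := hz₂.btw
  have visible : P₂.1 ∈ Set.uIcc a₁.1 P₁.1 ∨ P₁.1 ∈ Set.uIcc a₂.1 P₂.1 := by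
    simp only [Set.mem_uIcc, Set.uIoo, Set.mem_Ioo] at *
    omega
  rcases visible with hP | hP
  · exact (hz₁.sees.eq_of_mem P₂.1 b.2 hz₂.sees.mem le_rfl hz₁.lt hP).1.symm
  · exact (hz₂.sees.eq_of_mem P₁.1 b.2 hz₁.sees.mem le_rfl hz₂.lt hP).1

theorem eq_of_crossing (hz₁ : IsZig X S a₁ b₁ P₁) (hz₂ : IsZig X S a₂ b₂ P₂)
    (h : GreedyExecution X S) (hC : IsBlock X C) (hE : IsBlock X E) (hCE : Disjoint C E)
    (hb₁ : b₁ ∈ C) (hb₂ : b₂ ∈ C) (ha₁ : a₁ ∉ C) (ha₂ : a₂ ∉ C) (hP₁ : P₁ ∈ E) (hP₂ : P₂ ∈ E) :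
    a₁ = a₂ ∧ b₁ = b₂ := by
  obtain rfl : b₁ = b₂ := h.time_injOn hz₁.right_mem hz₂.right_mem <| le_antisymm
    (not_lt.1 (hz₂.not_lt_of_crossing hz₁ h hC hE hCE hb₂ hb₁ ha₂ hP₂ hP₁))
    (not_lt.1 (hz₁.not_lt_of_crossing hz₂ h hC hE hCE hb₁ hb₂ ha₁ hP₁ hP₂))
  obtain rfl := hz₁.key_eq_of_crossing hz₂ h hE (disjoint_left.1 hCE hb₁) hP₁ hP₂
  exact ⟨hz₁.left_eq_of_right_eq hz₂ h, rfl⟩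

theorem left_eq_top (hz : IsZig X S a b P) (h : GreedyExecution X S) (hA : IsBlock X A)
    (ha : a ∈ A) (hb : b ∉ A) (hP : P ∉ A) : a = TopPt A := by
  by_contra hne
  have hta := hA.top_lt_of_ne h.time_injOn ha hne
  have htop := hA.subset hA.top_mem
  have hbt := hA.time_lt_top_of_notMem ha hz.right_mem hb hz.lt.le
  have outside {q : Pt} (hq : q ∈ X) (hqA : q ∉ A) : q.1 ∉ Set.uIcc a.1 (TopPt A).1 :=
    fun hqk => hqA (hA.mem_of_key h.key_injOn ha hA.top_mem hq hqk)
  -- `TopPt A` sees the point `(P.1, b.2)` just as `a` does, so it would touch `P` before `a`.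
  have sees_top : Sees S (TopPt A) P.1 b.2 := by
    refine ⟨fun hkey => hP (h.key_injOn hz.key_mem htop hkey ▸ hA.top_mem), hbt, hz.sees.mem,
      fun y u hyu hbu hut hy => hz.sees.eq_of_mem y u hyu hbu (hut.trans hta) ?_⟩
    obtain ⟨q, hq, rfl, hqu⟩ := h.exists_access_key hyu
    have hqa := outside hq (hA.notMem_of_lt_top (hqu.trans_lt hut))
    have hPa := outside hz.key_mem hP
    simp only [Set.mem_uIcc] at *
    omega
  have touch := (h.touch_iff _ htop P.1).2 (.inr ⟨b.2, sees_top⟩)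
  exact hbt.ne' (hz.sees.eq_of_mem P.1 _ touch hbt.le hta Set.right_mem_uIcc).2

lemma not_lt_of_left_eq (hz₁ : IsZig X S a b₁ P₁) (hz₂ : IsZig X S a b₂ P₂)
    (h : GreedyExecution X S) (hD : IsBlock X D) (hb₁ : b₁ ∈ D) (hb₂ : b₂ ∈ D) (hP₁ : P₁ ∉ D)
    (hP₂ : P₂ ∉ D) (hside : a.1 < P₁.1 ↔ a.1 < P₂.1) : ¬ b₁.2 < b₂.2 := by
  intro hlt
  have hP₁top := hD.time_lt_top_of_notMem hb₁ hz₁.key_mem hP₁ (hz₁.time_le h)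
  have hb₂top : b₂ ≠ TopPt D := by
    rintro rfl
    exact (hD.top_le hb₁).not_gt hlt
  have hP₁b₂ := hD.notMem_uIoo_of_touch h hz₂.key_mem hP₂ hb₂ hb₂top hz₂.sees.mem hz₁.key_mem
    hP₁top
  have hbtw₁ := hz₁.btw
  have hbtw₂ := hz₂.btw
  have visible : P₂.1 ∈ Set.uIcc a.1 P₁.1 := by
    simp only [Set.mem_uIcc, Set.uIoo, Set.mem_Ioo] at *
    omega
  exact hlt.ne' (hz₁.sees.eq_of_mem P₂.1 b₂.2 hz₂.sees.mem hlt.le hz₂.lt visible).2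

theorem right_eq_of_left_eq (hz₁ : IsZig X S a b₁ P₁) (hz₂ : IsZig X S a b₂ P₂)
    (h : GreedyExecution X S) (hD : IsBlock X D) (hb₁ : b₁ ∈ D) (hb₂ : b₂ ∈ D) (hP₁ : P₁ ∉ D)
    (hP₂ : P₂ ∉ D) (hside : a.1 < P₁.1 ↔ a.1 < P₂.1) : b₁ = b₂ :=
  h.time_injOn hz₁.right_mem hz₂.right_mem <| le_antisymm
    (not_lt.1 (hz₂.not_lt_of_left_eq hz₁ h hD hb₂ hb₁ hP₂ hP₁ hside.symm))
    (not_lt.1 (hz₁.not_lt_of_left_eq hz₂ h hD hb₁ hb₂ hP₁ hP₂ hside))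

end IsZig

section LastTouch

variable {X S C D E F : Finset Pt} {K : Finset (Finset Pt)} {t u : ℤ}

/-- Some key of the block `E` is touched at time `t`. -/
def Touched (S E : Finset Pt) (t : ℤ) : Prop := ∃ P ∈ E, (P.1, t) ∈ S

/-- The last time before `u` at which the block `E` is touched (junk if there is none). -/
noncomputable def lastTouch (S E : Finset Pt) (u : ℤ) : ℤ := sSup {s | s < u ∧ Touched S E s}

/-- The blocks of `K` other than `C` that are touched when the top of `C` is accessed. -/
noncomputable def touchedAtTop (S : Finset Pt) (K : Finset (Finset Pt)) (C : Finset Pt) :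
    Finset (Finset Pt) :=
  K.filter fun E => E ≠ C ∧ Touched S E (TopPt C).2

lemma bddAbove_touched (S E : Finset Pt) (u : ℤ) : BddAbove {s | s < u ∧ Touched S E s} :=
  ⟨u, fun _ hs => hs.1.le⟩

lemma le_lastTouch (ht : Touched S E t) (htu : t < u) : t ≤ lastTouch S E u :=
  le_csSup (bddAbove_touched S E u) ⟨htu, ht⟩

lemma lastTouch_lt_and_touched (ht : Touched S E t) (htu : t < u) :
    lastTouch S E u < u ∧ Touched S E (lastTouch S E u) :=
  Int.csSup_mem (s := {s | s < u ∧ Touched S E s}) ⟨t, htu, ht⟩ (bddAbove_touched S E u)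

namespace IsBlock

lemma touched_top (hE : IsBlock X E) (h : GreedyExecution X S) : Touched S E (TopPt E).2 :=
  ⟨TopPt E, hE.top_mem, h.subset (hE.subset hE.top_mem)⟩

lemma top_le_of_touched (hE : IsBlock X E) (h : GreedyExecution X S) (ht : Touched S E t) :
    (TopPt E).2 ≤ t := by
  obtain ⟨P, hP, hPt⟩ := ht
  exact (hE.top_le hP).trans (h.time_le_of_touch (hE.subset hP) hPt)

lemma lastTouch_lt_lastTouch (hC : IsBlock X C) (hE : IsBlock X E) (hF : IsBlock X F)
    (h : GreedyExecution X S) (hCE : Disjoint C E) (hCF : Disjoint C F) (hEF : Disjoint E F)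
    (hE_touched : Touched S E (TopPt C).2) (hFC : (TopPt F).2 < (TopPt C).2)
    (hbtw : (TopPt F).1 ∈ Set.uIoo (TopPt C).1 (TopPt E).1) :
    lastTouch S F (TopPt C).2 < lastTouch S E (TopPt C).2 := by
  obtain ⟨P, hP, hPC⟩ := hE_touched
  have htop := hC.subset hC.top_mem
  obtain hkey | ⟨s, hsees⟩ := (h.touch_iff _ htop P.1).1 hPC
  · exact absurd hP (disjoint_left.1 hCE (h.key_injOn (hE.subset hP) htop hkey ▸ hC.top_mem))
  by_contra! hle
  obtain ⟨hlt, Q, hQ, hQS⟩ := lastTouch_lt_and_touched (hF.touched_top h) hFC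
  have hQbtw : Q.1 ∈ Set.uIoo (TopPt C).1 P.1 := hC.mem_uIoo_of_disjoint hE hF h.key_injOn hCF hEF
    hC.top_mem hC.top_mem hE.top_mem hP hF.top_mem hQ hbtw
  have hsF := (le_lastTouch (E := E) ⟨P, hP, hsees.mem⟩ hsees.lt).trans hle
  have hQP := (hsees.eq_of_mem Q.1 _ hQS hsF hlt (Set.uIoo_subset_uIcc_self hQbtw)).1
  exact Set.right_notMem_uIoo (hQP ▸ hQbtw)

lemma lastTouch_eq_of_not_touched (hC : IsBlock X C) (hE : IsBlock X E) (h : GreedyExecution X S)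
    (hCE : Disjoint C E) (hu : (TopPt C).2 < u)
    (hCu : ∀ a ∈ X, a.2 ∈ Set.Ico (TopPt C).2 u → a ∈ C) (hnot : ¬ Touched S E (TopPt C).2) :
    lastTouch S E u = lastTouch S E (TopPt C).2 := by
  suffices hsets : {s | s < u ∧ Touched S E s} = {s | s < (TopPt C).2 ∧ Touched S E s} by
    rw [lastTouch, hsets, lastTouch]
  refine Set.ext fun s => ⟨fun ⟨hsu, hs⟩ => ⟨?_, hs⟩, fun ⟨hsC, hs⟩ => ⟨hsC.trans hu, hs⟩⟩
  by_contra! hle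
  obtain ⟨P, hP, hPs⟩ := hs
  obtain ⟨b, hb, rfl⟩ := h.exists_access _ hPs
  exact hnot ⟨P, hP, hC.touch_top h (hE.subset hP) (disjoint_right.1 hCE hP)
    (hCu b hb ⟨hle, hsu⟩) hPs⟩

lemma lastTouch_eq_top (hC : IsBlock X C) (hE : IsBlock X E) (hF : IsBlock X F)
    (h : GreedyExecution X S) (hCE : Disjoint C E) (hCF : Disjoint C F) (hEF : Disjoint E F)
    (hu : (TopPt C).2 < u) (hCu : ∀ a ∈ X, a.2 ∈ Set.Ico (TopPt C).2 u → a ∈ C)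
    (hE_touched : Touched S E (TopPt C).2) (hFC : (TopPt F).2 < (TopPt C).2)
    (hbtw : (TopPt F).1 ∈ Set.uIoo (TopPt C).1 (TopPt E).1) :
    lastTouch S E u = (TopPt C).2 := by
  refine (le_lastTouch hE_touched hu).antisymm' (not_lt.1 fun hlt => ?_)
  obtain ⟨hltu, Q, hQ, hQS⟩ := lastTouch_lt_and_touched hE_touched hu
  obtain ⟨c, hcX, hc⟩ := h.exists_access _ hQS
  rw [← show c.2 = lastTouch S E u from hc] at hlt hltu hQS
  have hcC := hCu c hcX ⟨hlt.le, hltu⟩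
  exact hC.notMem_uIoo_of_touch h (hE.subset hQ) (disjoint_right.1 hCE hQ) hcC
    (by rintro rfl; exact hlt.false) hQS (hF.subset hF.top_mem) hFC
    (hC.mem_uIoo_of_disjoint hE hF h.key_injOn hCF hEF hC.top_mem hcC hE.top_mem hQ hF.top_mem
      hF.top_mem hbtw)

end IsBlock

lemma isAccess_lastTouch (h : GreedyExecution X S) (hK : ∀ E ∈ K, IsBlock X E)
    (hdisj : (K : Set (Finset Pt)).PairwiseDisjoint id) (hC : C ∈ K) (hu : (TopPt C).2 < u)
    (hCu : ∀ a ∈ X, a.2 ∈ Set.Ico (TopPt C).2 u → a ∈ C) :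
    IsAccess (fun E => (TopPt E).1) (K.filter fun E => (TopPt E).2 < (TopPt C).2)
      (touchedAtTop S K C) C (TopPt C).2 (fun E => lastTouch S E (TopPt C).2)
      (fun E => lastTouch S E u) := by
  have hCb := hK C hC
  have disj {E : Finset Pt} (hE : E ∈ K) (hne : E ≠ C) : Disjoint C E := hdisj hC hE hne.symm
  have ne_of_lt {F : Finset Pt} (hF : (TopPt F).2 < (TopPt C).2) : F ≠ C := by
    rintro rfl
    exact hF.false
  have ne_of_btw {E F : Finset Pt} (hF : (TopPt F).1 ∈ Set.uIoo (TopPt C).1 (TopPt E).1) :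
      E ≠ F := by
    rintro rfl
    exact Set.right_notMem_uIoo hF
  simp only [touchedAtTop]
  constructor
  · simp
  · intro E hE
    obtain ⟨hEK, hne, ht⟩ := mem_filter.1 hE
    refine mem_filter.2 ⟨hEK, ((hK E hEK).top_le_of_touched h ht).lt_of_ne fun htime => ?_⟩
    have htop := h.time_injOn ((hK E hEK).subset (hK E hEK).top_mem) (hCb.subset hCb.top_mem) htime
    exact disjoint_left.1 (disj hEK hne) hCb.top_mem (htop ▸ (hK E hEK).top_mem)
  · intro E hE
    obtain ⟨hEK, hlt⟩ := mem_filter.1 hE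
    exact (lastTouch_lt_and_touched ((hK E hEK).touched_top h) hlt).1
  · intro E hE F hF hbtw
    obtain ⟨hEK, hne, ht⟩ := mem_filter.1 hE
    obtain ⟨hFK, hlt⟩ := mem_filter.1 hF
    exact hCb.lastTouch_lt_lastTouch (hK E hEK) (hK F hFK) h (disj hEK hne)
      (disj hFK (ne_of_lt hlt)) (hdisj hEK hFK (ne_of_btw hbtw)) ht hlt hbtw
  · intro E hE
    exact le_lastTouch (mem_filter.1 hE).2.2 hu
  · intro E hE F hF hbtw
    obtain ⟨hEK, hne, ht⟩ := mem_filter.1 hE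
    obtain ⟨hFK, hlt⟩ := mem_filter.1 hF
    exact hCb.lastTouch_eq_top (hK E hEK) (hK F hFK) h (disj hEK hne) (disj hFK (ne_of_lt hlt))
      (hdisj hEK hFK (ne_of_btw hbtw)) hu hCu ht hlt hbtw
  · intro E hE hnot
    obtain ⟨hEK, hlt⟩ := mem_filter.1 hE
    exact hCb.lastTouch_eq_of_not_touched (hK E hEK) h (disj hEK (ne_of_lt hlt)) hu hCu
      fun ht => hnot (mem_filter.2 ⟨hEK, ne_of_lt hlt, ht⟩)

lemma card_touchedAtTop_lt (hC : C ∈ K) : (touchedAtTop S K C).card < K.card :=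
  card_lt_card <| filter_ssubset.2 ⟨C, hC, fun hne => hne.1 rfl⟩

lemma mem_part_of_mem_Ico (hD : IsBlock X D) (P : Finpartition D)
    (hP : ∀ E ∈ P.parts, IsBlock X E) (hC : C ∈ P.parts) {d : Pt} (hd : d ∈ D)
    (hu : u ≤ d.2 + 1)
    (hlast : ∀ F ∈ P.parts, (TopPt F).2 < u → (TopPt F).2 ≤ (TopPt C).2) {a : Pt} (ha : a ∈ X)
    (hau : a.2 ∈ Set.Ico (TopPt C).2 u) : a ∈ C := by
  have htop := (hP C hC).top_mem
  have haD : a ∈ D := hD.mem_of_time (P.le hC htop) hd ha hau.1 (by have := hau.2; omega)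
  obtain ⟨F, hF, haF⟩ := P.exists_mem haD
  have hFb := hP F hF
  have hFC := hlast F hF ((hFb.top_le haF).trans_lt hau.2)
  exact P.eq_of_mem_parts hC hF htop
    (hFb.mem_of_time hFb.top_mem haF ((hP C hC).subset htop) hFC hau.1) ▸ haF

theorem sum_card_touchedAtTop_le (h : GreedyExecution X S) (hD : IsBlock X D)
    (P : Finpartition D) (hP : ∀ E ∈ P.parts, IsBlock X E) :
    ∑ C ∈ P.parts, (touchedAtTop S P.parts C).card
      ≤ P.parts.card * (9 * Nat.log 2 (P.parts.card + 1) + 4) := by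
  obtain ⟨d, hd, hdmax⟩ := exists_max_image D Prod.snd hD.1
  have htop {C : Finset Pt} (hC : C ∈ P.parts) : TopPt C ∈ X :=
    (hP C hC).subset (hP C hC).top_mem
  have top_inj {C E : Finset Pt} (hC : C ∈ P.parts) (hE : E ∈ P.parts)
      (heq : TopPt C = TopPt E) : C = E :=
    P.eq_of_mem_parts hC hE (hP C hC).top_mem (heq ▸ (hP E hE).top_mem)
  have key_inj : Set.InjOn (fun C => (TopPt C).1) P.parts := fun C hC E hE hCE =>
    top_inj hC hE (h.key_injOn (htop hC) (htop hE) hCE)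
  have time_inj : Set.InjOn (fun C => (TopPt C).2) P.parts := fun C hC E hE hCE =>
    top_inj hC hE (h.time_injOn (htop hC) (htop hE) hCE)
  refine (Nat.le_add_left _ _).trans (add_sum_cost_le_card_mul (e := d.2 + 1)
    (Ψ := fun u => rankPotential P.parts (P.parts.filter fun E => (TopPt E).2 < u)
      (fun E => (TopPt E).1) (fun E => lastTouch S E u)) time_inj ?_ ?_ ?_)
  · intro u _ hu
    simp only [filter_false_of_mem fun E hE => (hu E hE).not_gt, rankPotential, sum_empty]
  · intro C hC u hue hu hlast
    have active : P.parts.filter (fun E => (TopPt E).2 < u)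
        = insert C (P.parts.filter fun E => (TopPt E).2 < (TopPt C).2) := by
      ext E
      simp only [mem_filter, mem_insert]
      constructor
      · rintro ⟨hE, hEu⟩
        exact (hlast E hE hEu).eq_or_lt.imp (fun heq => time_inj hE hC heq) fun hlt => ⟨hE, hlt⟩
      · rintro (rfl | ⟨hE, hEC⟩)
        · exact ⟨hC, hu⟩
        · exact ⟨hE, hEC.trans hu⟩
    simp only [active]
    have access := isAccess_lastTouch h hP P.disjoint hC hu fun a ha =>
      mem_part_of_mem_Ico hD P hP hC hd hue hlast ha
    exact access.rankPotential_add_card_le (insert_subset hC (filter_subset _ _)) key_inj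
  · exact fun C hC => Int.lt_add_one_of_le (hdmax _ (P.le hC (hP C hC).top_mem))

end LastTouch

namespace DecompTree

variable {X A B C D E N : Finset Pt} {T : DecompTree X}

lemma mem_children_s1 : C ∈ T.children D ↔ C ∈ T.nodes ∧ C ≠ X ∧ T.parent C = D := mem_filter

lemma mem_nodes_of_mem_children (hC : C ∈ T.children D) : C ∈ T.nodes := (mem_children_s1.1 hC).1

lemma isBlock_of_mem_children (hC : C ∈ T.children D) : IsBlock X C :=
  T.isBlock_nodes C (mem_nodes_of_mem_children hC)

lemma ssubset_of_mem_children_s1 (hC : C ∈ T.children D) : C ⊂ D := by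
  obtain ⟨hCn, hCX, rfl⟩ := mem_children_s1.1 hC
  exact T.ssubset_parent C hCn hCX

lemma children_eq_empty_iff (hD : D ∈ T.nodes) : T.children D = ∅ ↔ D.card = 1 := by
  rw [← T.leaf_iff D hD, eq_empty_iff_forall_notMem]
  simp only [mem_children_s1, not_exists, not_and]

lemma existsUnique_child (hD : D ∈ T.nodes) (hcard : D.card ≠ 1) {x : Pt} (hx : x ∈ D) :
    ∃! C, C ∈ T.children D ∧ x ∈ C := by
  simpa only [mem_children_s1, and_assoc] using T.children_partition D hD hcard x hx

/-- The partition of an internal node into its children. -/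
noncomputable def childPartition (T : DecompTree X) (hD : D ∈ T.nodes) (hcard : D.card ≠ 1) :
    Finpartition D :=
  .ofExistsUnique (T.children D) (fun _ hC => (ssubset_of_mem_children_s1 hC).1)
    (fun _ hx => existsUnique_child hD hcard hx)
    fun hempty => (isBlock_of_mem_children hempty).1.ne_empty rfl

lemma children_disjoint (hD : D ∈ T.nodes) (hC : C ∈ T.children D) (hE : E ∈ T.children D)
    (hne : C ≠ E) : Disjoint C E :=
  (T.childPartition hD fun hcard =>
    notMem_empty C ((children_eq_empty_iff hD).2 hcard ▸ hC)).disjoint hC hE hne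

lemma exists_separating_children (hN : N ∈ T.nodes) {x y : Pt} (hx : x ∈ N) (hy : y ∈ N)
    (hxy : x ≠ y) :
    ∃ D ∈ T.nodes, D ⊆ N ∧ ∃ C ∈ T.children D, ∃ E ∈ T.children D, C ≠ E ∧ x ∈ C ∧ y ∈ E := by
  obtain ⟨D, hD, hmin⟩ := exists_min_image
    (T.nodes.filter fun D => D ⊆ N ∧ x ∈ D ∧ y ∈ D) card ⟨N, mem_filter.2 ⟨hN, subset_rfl, hx, hy⟩⟩
  obtain ⟨hDn, hDN, hxD, hyD⟩ := mem_filter.1 hD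
  have hcard : D.card ≠ 1 := fun hone => hxy (card_le_one.1 hone.le x hxD y hyD)
  obtain ⟨C, ⟨hC, hxC⟩, -⟩ := existsUnique_child hDn hcard hxD
  obtain ⟨E, ⟨hE, hyE⟩, -⟩ := existsUnique_child hDn hcard hyD
  refine ⟨D, hDn, hDN, C, hC, E, hE, ?_, hxC, hyE⟩
  rintro rfl
  have hCD := ssubset_of_mem_children_s1 hC
  exact (hmin C (mem_filter.2 ⟨mem_nodes_of_mem_children hC, hCD.1.trans hDN, hxC, hyE⟩)).not_gt
    (card_lt_card hCD)

lemma eq_or_parent_subset_of_mem (hA : A ∈ T.nodes) (hB : B ∈ T.nodes) {x : Pt} (hxA : x ∈ A)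
    (hxB : x ∈ B) : A = B ∨ (A ≠ X ∧ T.parent A ⊆ B) ∨ (B ≠ X ∧ T.parent B ⊆ A) := by
  have card_diff_lt {N : Finset Pt} (hN : N ∈ T.nodes) (hNX : N ≠ X) :
      X.card - (T.parent N).card < X.card - N.card := by
    have hlt := card_lt_card (T.ssubset_parent N hN hNX)
    have := card_le_card (T.isBlock_nodes _ (T.parent_mem N hN hNX)).subset
    omega
  induction hm : (X.card - A.card) + (X.card - B.card) using Nat.strong_induction_on
    generalizing A B with
  | _ m ih =>
    subst hm
    rcases eq_or_ne A X with rfl | hAX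
    · rcases eq_or_ne B A with rfl | hBA
      · exact .inl rfl
      · exact .inr (.inr ⟨hBA, (T.isBlock_nodes _ (T.parent_mem B hB hBA)).subset⟩)
    have hA' := T.parent_mem A hA hAX
    have hAA' := T.ssubset_parent A hA hAX
    rcases eq_or_ne B X with rfl | hBX
    · exact .inr (.inl ⟨hAX, (T.isBlock_nodes _ hA').subset⟩)
    have hB' := T.parent_mem B hB hBX
    have hBB' := T.ssubset_parent B hB hBX
    rcases ih _ (Nat.add_lt_add_right (card_diff_lt hA hAX) _) hA' hB (hAA'.1 hxA) hxB rfl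
      with hA'B | ⟨hA'X, hsub⟩ | ⟨-, hB'A'⟩
    · exact .inr (.inl ⟨hAX, hA'B.subset⟩)
    · exact .inr (.inl ⟨hAX, (T.ssubset_parent _ hA' hA'X).1.trans hsub⟩)
    rcases ih _ (Nat.add_lt_add_left (card_diff_lt hB hBX) _) hA hB' hxA (hBB'.1 hxB) rfl
      with hAB' | ⟨-, hA'B'⟩ | ⟨hB'X, hsub⟩
    · exact .inr (.inr ⟨hBX, hAB'.symm.subset⟩)
    · left
      by_contra hne
      have hparent := hA'B'.antisymm hB'A'
      exact disjoint_left.1 (children_disjoint hA' (mem_children_s1.2 ⟨hA, hAX, rfl⟩)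
        (mem_children_s1.2 ⟨hB, hBX, hparent.symm⟩) hne) hxA hxB
    · exact .inr (.inr ⟨hBX, (T.ssubset_parent _ hB' hB'X).1.trans hsub⟩)

/-- The children of `D` not containing the topmost point of `D`. -/
noncomputable def lateChildren (T : DecompTree X) (D : Finset Pt) : Finset (Finset Pt) :=
  (T.children D).filter fun A => TopPt D ∉ A

lemma card_lateChildren_add_one (hD : D ∈ T.nodes) (hcard : D.card ≠ 1) :
    (T.lateChildren D).card + 1 = (T.children D).card := by
  obtain ⟨C, ⟨hC, htop⟩, huniq⟩ := existsUnique_child hD hcard (T.isBlock_nodes D hD).top_mem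
  rw [← card_erase_add_one hC]
  congr 2
  ext A
  simp only [lateChildren, mem_filter, mem_erase, and_comm (b := A ∈ T.children D),
    and_congr_right_iff]
  exact fun hA => not_congr ⟨fun hmem => huniq A ⟨hA, hmem⟩, fun heq => heq ▸ htop⟩

lemma not_subset_of_top_eq (hX : Set.InjOn Prod.snd (X : Set Pt)) (hD : D ∈ T.nodes)
    (hA : A ∈ T.lateChildren D) (hB : B ∈ T.nodes) (htop : TopPt A = TopPt B) : ¬ D ⊆ B := by
  intro hDB
  obtain ⟨hAD, hDA⟩ := mem_filter.1 hA
  have hAb := isBlock_of_mem_children hAD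
  have hDb := T.isBlock_nodes D hD
  have hlt := hDb.top_lt_of_ne hX ((ssubset_of_mem_children_s1 hAD).1 hAb.top_mem)
    fun heq => hDA (heq ▸ hAb.top_mem)
  exact ((T.isBlock_nodes B hB).top_le (hDB hDb.top_mem)).not_gt (htop ▸ hlt)

theorem sum_card_lateChildren_le (hX : Set.InjOn Prod.snd (X : Set Pt)) :
    ∑ D ∈ T.nodes, (T.lateChildren D).card ≤ X.card := by
  rw [← card_sigma]
  refine card_le_card_of_injOn (fun c => TopPt c.2) (fun c hc => ?_) ?_
  · have hb := isBlock_of_mem_children (mem_filter.1 (mem_sigma.1 hc).2).1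
    exact hb.subset hb.top_mem
  · rintro ⟨D, A⟩ hA ⟨D', B⟩ hB (htop : TopPt A = TopPt B)
    obtain ⟨hD, hA⟩ : D ∈ T.nodes ∧ A ∈ T.lateChildren D := mem_sigma.1 hA
    obtain ⟨hD', hB⟩ : D' ∈ T.nodes ∧ B ∈ T.lateChildren D' := mem_sigma.1 hB
    obtain ⟨hAn, -, rfl⟩ := mem_children_s1.1 (mem_filter.1 hA).1
    obtain ⟨hBn, -, rfl⟩ := mem_children_s1.1 (mem_filter.1 hB).1
    have hAtop := (T.isBlock_nodes A hAn).top_mem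
    rcases eq_or_parent_subset_of_mem hAn hBn hAtop (htop ▸ (T.isBlock_nodes B hBn).top_mem)
      with rfl | ⟨-, hsub⟩ | ⟨-, hsub⟩
    · rfl
    · exact absurd hsub (not_subset_of_top_eq hX hD hA hBn htop)
    · exact absurd hsub (not_subset_of_top_eq hX hD' hB hAn htop.symm)

end DecompTree

lemma add_two_mul_le_mul_log {m l : ℕ} (hpairs : m ≤ (l + 1) * l)
    (hpotential : m ≤ (l + 1) * (9 * Nat.log 2 (l + 1 + 1) + 4)) :
    m + 2 * l ≤ 14 * l * Nat.log 2 (l + 1) := by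
  rcases Nat.eq_zero_or_pos l with rfl | hl
  · omega
  have le_log {e : ℕ} (he : 2 ^ e ≤ l + 1) : e ≤ Nat.log 2 (l + 1) :=
    Nat.le_log_of_pow_le one_lt_two he
  by_cases hsmall : l + 3 ≤ 14 * Nat.log 2 (l + 1)
  · calc m + 2 * l ≤ (l + 1) * l + 2 * l := Nat.add_le_add_right hpairs _
      _ = l * (l + 3) := by ring
      _ ≤ l * (14 * Nat.log 2 (l + 1)) := Nat.mul_le_mul_left l hsmall
      _ = 14 * l * Nat.log 2 (l + 1) := by ring
  -- Through `hsmall`, each lower bound on the logarithm gives a larger `l`, hence a better bound.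
  have log_ge_one : 1 ≤ Nat.log 2 (l + 1) := le_log (by omega)
  have log_ge_three : 3 ≤ Nat.log 2 (l + 1) := le_log (by omega)
  have log_ge_five : 5 ≤ Nat.log 2 (l + 1) := le_log (by omega)
  have log_succ : Nat.log 2 (l + 1 + 1) ≤ Nat.log 2 (l + 1) + 1 := by
    rw [← Nat.log_mul_base one_lt_two l.succ_ne_zero]
    exact Nat.log_mono_right (by omega)
  calc m + 2 * l ≤ (l + 1) * (9 * (Nat.log 2 (l + 1) + 1) + 4) + 2 * l :=
        Nat.add_le_add_right (hpotential.trans (Nat.mul_le_mul_left _ (by omega))) _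
    _ ≤ 14 * l * Nat.log 2 (l + 1) := by nlinarith

namespace DecompTree

variable {X S D : Finset Pt} {T : DecompTree X} {k : ℕ}

/-- The charges available at the node `D`: a pair of children of which the second is touched by
the top of the first, or a late child together with a side. -/
noncomputable def charges (T : DecompTree X) (S D : Finset Pt) :
    Finset ((Σ _ : Finset Pt, Finset Pt) ⊕ Finset Pt × Bool) :=
  ((T.children D).sigma (touchedAtTop S (T.children D))).disjSum (T.lateChildren D ×ˢ univ)

/-- The charging scheme for a pair `(a, b)` completed to a zig by `P`: either a child of `D`
separates `b` from both `a` and `P`, or a child of `D` separates `a` from `b` while `P` lies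
outside `D`. -/
inductive IsCharge (X S D : Finset Pt) (a b : Pt) :
    (Σ _ : Finset Pt, Finset Pt) ⊕ Finset Pt × Bool → Prop
  | siblings {C E : Finset Pt} {P : Pt} (hz : IsZig X S a b P) (ha : a ∉ C) (hb : b ∈ C)
    (hP : P ∈ E) : IsCharge X S D a b (.inl ⟨C, E⟩)
  | side {A : Finset Pt} {P : Pt} (hz : IsZig X S a b P) (ha : a ∈ A) (hbA : b ∉ A) (hb : b ∈ D)
    (hP : P ∉ D) : IsCharge X S D a b (.inr (A, decide (a.1 < P.1)))

lemma exists_isCharge (T : DecompTree X) (h : GreedyExecution X S) {a b P : Pt}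
    (hz : IsZig X S a b P) : ∃ D ∈ T.nodes, ∃ τ ∈ T.charges S D, IsCharge X S D a b τ := by
  have hbP : b ≠ P := by
    rintro rfl
    simpa using hz.btw
  obtain ⟨D, hD, -, C, hC, E, hE, hCE, hb, hP⟩ :=
    exists_separating_children T.root_mem hz.right_mem hz.key_mem hbP
  have hPC := disjoint_right.1 (children_disjoint hD hC hE hCE) hP
  by_cases ha : a ∈ C
  · obtain ⟨D', hD', hD'C, B, hB, A, hA, hBA, hbB, haA⟩ := exists_separating_children
      (mem_nodes_of_mem_children hC) hb ha fun hba => hz.lt.ne (congrArg Prod.snd hba)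
    have hbA := disjoint_left.1 (children_disjoint hD' hB hA hBA) hbB
    have hbD' := (ssubset_of_mem_children_s1 hB).1 hbB
    have late : TopPt D' ∉ A := fun htop => hbA ((isBlock_of_mem_children hA).mem_of_time htop haA
      hz.right_mem ((T.isBlock_nodes D' hD').top_le hbD') hz.lt.le)
    exact ⟨D', hD', _, inr_mem_disjSum.2 (mem_product.2 ⟨mem_filter.2 ⟨hA, late⟩, mem_univ _⟩),
      .side hz haA hbA hbD' fun hPD' => hPC (hD'C hPD')⟩
  · have touched : Touched S E (TopPt C).2 :=
      ⟨P, hP, (isBlock_of_mem_children hC).touch_top h hz.key_mem hPC hb hz.sees.mem⟩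
    exact ⟨D, hD, _, inl_mem_disjSum.2 (mem_sigma.2 ⟨hC, mem_filter.2 ⟨hE, hCE.symm, touched⟩⟩),
      .siblings hz ha hb hP⟩

lemma IsCharge.unique (h : GreedyExecution X S) (hD : D ∈ T.nodes)
    {τ : (Σ _ : Finset Pt, Finset Pt) ⊕ Finset Pt × Bool} (hτ : τ ∈ T.charges S D)
    {a₁ a₂ b₁ b₂ : Pt} (h₁ : IsCharge X S D a₁ b₁ τ) (h₂ : IsCharge X S D a₂ b₂ τ) :
    a₁ = a₂ ∧ b₁ = b₂ := by
  rcases τ with ⟨C, E⟩ | ⟨A, side⟩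
  · obtain ⟨hC, hE⟩ := mem_sigma.1 (inl_mem_disjSum.1 hτ)
    obtain ⟨hE, hEC, -⟩ := mem_filter.1 hE
    cases h₁ with | siblings hz₁ ha₁ hb₁ hP₁ =>
    cases h₂ with | siblings hz₂ ha₂ hb₂ hP₂ =>
    exact hz₁.eq_of_crossing hz₂ h (isBlock_of_mem_children hC) (isBlock_of_mem_children hE)
      (children_disjoint hD hC hE hEC.symm) hb₁ hb₂ ha₁ ha₂ hP₁ hP₂
  · have hA := (mem_filter.1 (mem_product.1 (inr_mem_disjSum.1 hτ)).1).1
    have hAb := isBlock_of_mem_children hA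
    have hAD := (ssubset_of_mem_children_s1 hA).1
    generalize hside : side = side' at h₂
    cases h₁ with | side hz₁ ha₁ hbA₁ hb₁ hP₁ =>
    cases h₂ with | side hz₂ ha₂ hbA₂ hb₂ hP₂ =>
    obtain rfl : a₁ = a₂ := (hz₁.left_eq_top h hAb ha₁ hbA₁ fun hP => hP₁ (hAD hP)).trans
      (hz₂.left_eq_top h hAb ha₂ hbA₂ fun hP => hP₂ (hAD hP)).symm
    exact ⟨rfl, hz₁.right_eq_of_left_eq hz₂ h (T.isBlock_nodes D hD) hb₁ hb₂ hP₁ hP₂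
      (decide_eq_decide.1 hside)⟩

lemma card_charges_le (h : GreedyExecution X S) (hD : D ∈ T.nodes)
    (hk : (T.children D).card ≤ k) :
    (T.charges S D).card ≤ 14 * (T.lateChildren D).card * Nat.log 2 k := by
  by_cases hcard : D.card = 1
  · simp [charges, lateChildren, (children_eq_empty_iff hD).2 hcard]
  have hlate := card_lateChildren_add_one hD hcard
  have potential : ∑ C ∈ T.children D, (touchedAtTop S (T.children D) C).card
      ≤ (T.children D).card * (9 * Nat.log 2 ((T.children D).card + 1) + 4) :=
    sum_card_touchedAtTop_le h (T.isBlock_nodes D hD) (T.childPartition hD hcard)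
      fun _ => isBlock_of_mem_children
  have pairs : ∑ C ∈ T.children D, (touchedAtTop S (T.children D) C).card
      ≤ (T.children D).card * (T.lateChildren D).card :=
    sum_le_card_nsmul _ _ _ fun C hC =>
      Nat.le_of_lt_succ ((card_touchedAtTop_lt hC).trans_eq hlate.symm)
  rw [← hlate] at potential pairs hk
  rw [charges, card_disjSum, card_sigma, card_product, card_univ, Fintype.card_bool, mul_comm _ 2]
  exact (add_two_mul_le_mul_log pairs potential).trans
    (Nat.mul_le_mul_left _ (Nat.log_mono_right hk))

theorem card_le_of_forall_isZig (T : DecompTree X) (h : GreedyExecution X S)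
    (hk : ∀ D ∈ T.nodes, (T.children D).card ≤ k) {M : Finset (Pt × Pt)}
    (hM : ∀ c ∈ M, ∃ P, IsZig X S c.1 c.2 P) : M.card ≤ 14 * X.card * Nat.log 2 k :=
  calc M.card ≤ (T.nodes.sigma (T.charges S)).card :=
        card_le_card_of_forall_subsingleton (fun c τ => IsCharge X S τ.1 c.1 c.2 τ.2)
          (fun c hc => by
            obtain ⟨P, hz⟩ := hM c hc
            obtain ⟨D, hD, τ, hτ, hcτ⟩ := T.exists_isCharge h hz
            exact ⟨⟨D, τ⟩, mem_sigma.2 ⟨hD, hτ⟩, hcτ⟩)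
          (fun τ hτ c hc d hd => by
            obtain ⟨hD, hτ⟩ := mem_sigma.1 hτ
            exact Prod.ext_iff.2 (hc.2.unique h hD hτ hd.2))
    _ = ∑ D ∈ T.nodes, (T.charges S D).card := card_sigma _ _
    _ ≤ ∑ D ∈ T.nodes, 14 * (T.lateChildren D).card * Nat.log 2 k :=
        sum_le_sum fun D hD => card_charges_le h hD (hk D hD)
    _ = 14 * (∑ D ∈ T.nodes, (T.lateChildren D).card) * Nat.log 2 k := by
        rw [mul_sum, sum_mul]
    _ ≤ 14 * X.card * Nat.log 2 k :=
        Nat.mul_le_mul_right _ (Nat.mul_le_mul_left _ (sum_card_lateChildren_le h.time_injOn))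

end DecompTree

/-- For every integer `k ≥ 2` and every `k`-decomposable permutation point
set `X` of size `n`, `|MMC| ≤ 14 · n · log₂ k`. -/
theorem mmc_bound (n k : ℕ) (X : Finset Pt) (hk : 2 ≤ k)
    (hX : IsPermPointSet n X) (hdec : kDecomposable k X) :
    ((((greedyG n X).filter (fun p => inMMC X (greedyG n X) p)).image
        (CP X (greedyG n X))).card : ℝ) ≤ 14 * n * Real.logb 2 k := by
  obtain ⟨T, hT⟩ := hdec
  have exec : GreedyExecution X (X ∪ greedyG n X) :=
    greedyExecution_union_greedyG hX.key_injOn hX.time_injOn fun _ => hX.time_mem_Icc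
  have card_le := T.card_le_of_forall_isZig exec hT
    (M := ((greedyG n X).filter fun p => inMMC X (greedyG n X) p).image (CP X (greedyG n X)))
    fun c hc => by
      obtain ⟨r, hr, rfl⟩ := mem_image.1 hc
      exact exists_isZig_CP exec (mem_filter.1 hr).1 (mem_filter.1 hr).2
  rw [hX.card_eq] at card_le
  calc _ ≤ ((14 * n * Nat.log 2 k : ℕ) : ℝ) := Nat.cast_le.2 card_le
    _ = 14 * n * (Nat.log 2 k : ℝ) := by push_cast; rfl
    _ ≤ 14 * n * Real.logb 2 k :=
        mul_le_mul_of_nonneg_left (mod_cast Real.natLog_le_logb k 2) (by positivity)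
end
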